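/- arXiv:1802.09692 — 3 statements merged into one kernel-verified Lean document; each statement's English description precedes it below -/
import Mathlib

section
/- Let $f, g \in C(S^n, \mathbb{R})$ be non-constant functions such that for every half space $H = \{x : x\cdot u \ge 0\}$ and every $x, y \in S^n \cap H$, $(f(x) - f(Rx))(g(y) - g(Ry)) \ge 0$, where $R$ is the reflection with respect to $\partial H$. Then $f$ and $g$ are both radial symmetric and decreasing with respect to the same point of $S^n$. -/
open Metric Set
open scoped RealInnerProductSpace

noncomputable section

open MeasureTheory Filter Topology

section Reflections

variable {E : Type*} [NormedAddCommGroup E] [InnerProductSpace ℝ E]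

/-- The reflection in the hyperplane orthogonal to `u`. -/
def hyperplaneReflection (u : E) : E ≃ₗᵢ[ℝ] E := (ℝ ∙ u)ᗮ.reflection

theorem hyperplaneReflection_apply (u x : E) :
    hyperplaneReflection u x = x - (2 * (⟪x, u⟫ / ‖u‖ ^ 2)) • u := by
  rw [hyperplaneReflection, Submodule.reflection_orthogonal_apply,
    Submodule.reflection_singleton_apply, real_inner_comm, mul_smul]
  simp [two_smul]

theorem hyperplaneReflection_involutive (u x : E) :
    hyperplaneReflection u (hyperplaneReflection u x) = x :=
  Submodule.reflection_reflection _ x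

theorem hyperplaneReflection_smul {c : ℝ} (hc : c ≠ 0) (u : E) :
    hyperplaneReflection (c • u) = hyperplaneReflection u := by
  have : IsUnit c := hc.isUnit
  unfold hyperplaneReflection
  congr 2
  exact Submodule.span_singleton_smul_eq this u

theorem hyperplaneReflection_neg (u : E) :
    hyperplaneReflection (-u) = hyperplaneReflection u := by
  simpa using hyperplaneReflection_smul (c := -1) (by norm_num) u

theorem hyperplaneReflection_self (u : E) : hyperplaneReflection u u = -u :=
  Submodule.reflection_orthogonalComplement_singleton_eq_neg u

theorem hyperplaneReflection_sub {x y : E} (h : ‖x‖ = ‖y‖) :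
    hyperplaneReflection (x - y) x = y :=
  Submodule.reflection_sub h

theorem inner_hyperplaneReflection (u x y : E) :
    ⟪hyperplaneReflection u x, y⟫ = ⟪x, hyperplaneReflection u y⟫ := by
  rw [← (hyperplaneReflection u).inner_map_map, hyperplaneReflection_involutive]

theorem inner_hyperplaneReflection_self (u x : E) :
    ⟪hyperplaneReflection u x, u⟫ = -⟪x, u⟫ := by
  rw [inner_hyperplaneReflection, hyperplaneReflection_self, inner_neg_right]

theorem hyperplaneReflection_hyperplaneReflection (u v x : E) :
    hyperplaneReflection (hyperplaneReflection u v) x =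
      hyperplaneReflection u (hyperplaneReflection v (hyperplaneReflection u x)) := by
  rw [hyperplaneReflection_apply v, map_sub, map_smul, hyperplaneReflection_involutive,
    inner_hyperplaneReflection, hyperplaneReflection_apply _ x, LinearIsometryEquiv.norm_map]

theorem hyperplaneReflection_mem_sphere {u x : E} (hx : x ∈ sphere (0 : E) 1) :
    hyperplaneReflection u x ∈ sphere (0 : E) 1 := by
  simpa using hx

theorem continuousAt_hyperplaneReflection {T : Type*} [TopologicalSpace T] {v : T → E} {t : T}
    (hv : ContinuousAt v t) (h0 : v t ≠ 0) (x : E) :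
    ContinuousAt (fun s => hyperplaneReflection (v s) x) t := by
  simp only [hyperplaneReflection_apply]
  have : ‖v t‖ ^ 2 ≠ 0 := by simpa using h0
  fun_prop (disch := assumption)

theorem ContinuousOn.tendsto_comp_hyperplaneReflection {T : Type*} [TopologicalSpace T]
    {f : E → ℝ} (hf : ContinuousOn f (sphere 0 1)) {v : T → E} {t : T}
    (hv : ContinuousAt v t) (h0 : v t ≠ 0) {x : E} (hx : x ∈ sphere (0 : E) 1) :
    Tendsto (fun s => f (hyperplaneReflection (v s) x)) (𝓝 t)
      (𝓝 (f (hyperplaneReflection (v t) x))) := by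
  refine (hf _ (hyperplaneReflection_mem_sphere hx)).tendsto.comp ?_
  exact tendsto_nhdsWithin_iff.2 ⟨continuousAt_hyperplaneReflection hv h0 x,
    Eventually.of_forall fun s => hyperplaneReflection_mem_sphere hx⟩

/-- `f` takes larger values on the side of `u` of the hyperplane orthogonal to `u`. -/
def DominatesToward (f : E → ℝ) (u : E) : Prop :=
  ∀ x ∈ sphere (0 : E) 1, 0 ≤ ⟪x, u⟫ → f (hyperplaneReflection u x) ≤ f x

/-- `f` is symmetric on the sphere under the reflection in the hyperplane orthogonal to `u`. -/
def ReflectionInvariant (f : E → ℝ) (u : E) : Prop :=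
  ∀ x ∈ sphere (0 : E) 1, f (hyperplaneReflection u x) = f x

theorem ReflectionInvariant.reflect {f : E → ℝ} {u v : E} (hu : ReflectionInvariant f u)
    (hv : ReflectionInvariant f v) : ReflectionInvariant f (hyperplaneReflection u v) := by
  intro x hx
  rw [hyperplaneReflection_hyperplaneReflection, hu _ (by simpa using hx),
    hv _ (by simpa using hx), hu x hx]

theorem reflectionInvariant_smul_iff {f : E → ℝ} {u : E} {c : ℝ} (hc : c ≠ 0) :
    ReflectionInvariant f (c • u) ↔ ReflectionInvariant f u := by
  simp [ReflectionInvariant, hyperplaneReflection_smul hc]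

theorem DominatesToward.reflectionInvariant {f : E → ℝ} {u : E} (h : DominatesToward f u)
    (h' : DominatesToward f (-u)) : ReflectionInvariant f u := by
  have key : ∀ x ∈ sphere (0 : E) 1, f (hyperplaneReflection u x) ≤ f x := by
    intro x hx
    rcases le_total 0 ⟪x, u⟫ with hxu | hxu
    · exact h x hx hxu
    · rw [← hyperplaneReflection_neg]
      exact h' x hx (by simpa using hxu)
  intro x hx
  refine le_antisymm (key x hx) ?_
  simpa [hyperplaneReflection_involutive] using
    key _ (hyperplaneReflection_mem_sphere (u := u) hx)

theorem hyperplaneReflection_rotation {a w : E} (ha : ‖a‖ = 1) (hw : ‖w‖ = 1) (haw : ⟪a, w⟫ = 0)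
    (s : ℝ) :
    hyperplaneReflection (Real.cos s • a + Real.sin s • w) a =
      (-1 : ℝ) • (Real.cos (2 * s) • a + Real.sin (2 * s) • w) := by
  have haa : ⟪a, a⟫ = 1 := by rw [real_inner_self_eq_norm_sq, ha]; norm_num
  have hww : ⟪w, w⟫ = 1 := by rw [real_inner_self_eq_norm_sq, hw]; norm_num
  have hwa : ⟪w, a⟫ = 0 := by rw [real_inner_comm, haw]
  have hn : ‖Real.cos s • a + Real.sin s • w‖ ^ 2 = 1 := by
    rw [← real_inner_self_eq_norm_sq]
    simp only [inner_add_left, inner_add_right, real_inner_smul_left, real_inner_smul_right,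
      haa, hww, haw, hwa]
    linear_combination Real.cos_sq_add_sin_sq s
  rw [hyperplaneReflection_apply, hn, Real.cos_two_mul, Real.sin_two_mul]
  simp only [inner_add_right, real_inner_smul_right, haa, haw]
  module

/-- A function invariant under all reflections near a given one is invariant under all
reflections. -/
theorem reflectionInvariant_of_eventually {f : E → ℝ} {a : E} (ha : ‖a‖ = 1)
    (h : ∀ᶠ u in 𝓝 a, ReflectionInvariant f u) {v : E} (hv : v ≠ 0) :
    ReflectionInvariant f v := by
  have haa : ⟪a, a⟫ = 1 := by rw [real_inner_self_eq_norm_sq, ha]; norm_num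
  have hInv : ReflectionInvariant f a := h.self_of_nhds
  have circle : ∀ w : E, ‖w‖ = 1 → ⟪a, w⟫ = 0 → ∀ t : ℝ,
      ReflectionInvariant f (Real.cos t • a + Real.sin t • w) := by
    intro w hw haw t
    have double : ∀ s : ℝ, ReflectionInvariant f (Real.cos s • a + Real.sin s • w) →
        ReflectionInvariant f (Real.cos (2 * s) • a + Real.sin (2 * s) • w) := by
      intro s hs
      have := hs.reflect hInv
      rwa [hyperplaneReflection_rotation ha hw haw,
        reflectionInvariant_smul_iff (by norm_num)] at this
    have small : ∀ᶠ s : ℝ in 𝓝 0,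
        ReflectionInvariant f (Real.cos s • a + Real.sin s • w) := by
      have hc : Tendsto (fun s : ℝ => Real.cos s • a + Real.sin s • w) (𝓝 0) (𝓝 a) := by
        have : Continuous (fun s : ℝ => Real.cos s • a + Real.sin s • w) := by fun_prop
        simpa using this.tendsto 0
      exact hc.eventually h
    have hlim : Tendsto (fun k : ℕ => t * (1 / 2 : ℝ) ^ k) atTop (𝓝 0) := by
      simpa using (tendsto_pow_atTop_nhds_zero_of_lt_one (r := (1 / 2 : ℝ))
        (by norm_num) (by norm_num)).const_mul t
    obtain ⟨k, hk⟩ := (hlim.eventually small).exists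
    clear hlim
    induction k with
    | zero => simpa using hk
    | succ k ih =>
      apply ih
      have := double _ hk
      rwa [show 2 * (t * (1 / 2 : ℝ) ^ (k + 1)) = t * (1 / 2 : ℝ) ^ k by ring] at this
  set w := v - ⟪a, v⟫ • a with hw
  have haw : ⟪a, w⟫ = 0 := by
    rw [hw, inner_sub_right, real_inner_smul_right, haa, mul_one, sub_self]
  by_cases hw0 : w = 0
  · have hva : v = ⟪a, v⟫ • a := sub_eq_zero.1 hw0
    have hc : ⟪a, v⟫ ≠ 0 := fun h0 => hv (by rw [hva, h0, zero_smul])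
    rw [hva]
    exact (reflectionInvariant_smul_iff hc).2 hInv
  · have hwn : ‖w‖ ≠ 0 := norm_ne_zero_iff.2 hw0
    set z : ℂ := ⟨⟪a, v⟫, ‖w‖⟩ with hz
    have hz0 : ‖z‖ ≠ 0 := by
      rw [norm_ne_zero_iff]
      intro h0
      exact hwn (by simpa [hz] using congrArg Complex.im h0)
    have key := circle (‖w‖⁻¹ • w) (by rw [norm_smul]; simp [hwn])
      (by rw [real_inner_smul_right, haw, mul_zero]) z.arg
    rw [← reflectionInvariant_smul_iff hz0] at key
    convert key using 1
    rw [smul_add, smul_smul, smul_smul, Complex.norm_mul_cos_arg, Complex.norm_mul_sin_arg,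
      smul_smul]
    simp only [hz]
    rw [mul_inv_cancel₀ hwn, one_smul, hw, add_sub_cancel]

theorem exists_const_of_reflectionInvariant {f : E → ℝ} {a : E} (ha : ‖a‖ = 1)
    (h : ∀ v : E, v ≠ 0 → ReflectionInvariant f v) : ∃ c, ∀ x ∈ sphere (0 : E) 1, f x = c := by
  refine ⟨f a, fun x hx => ?_⟩
  have hx1 : ‖x‖ = 1 := by simpa using hx
  by_cases hxa : x - a = 0
  · rw [sub_eq_zero.1 hxa]
  · rw [← h _ hxa x hx, hyperplaneReflection_sub (hx1.trans ha.symm)]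

/-- If every reflection leaves one of two continuous functions invariant, then one of the two
functions is constant. -/
theorem exists_const_of_forall_reflectionInvariant_or {f g : E → ℝ}
    (hg : ContinuousOn g (sphere 0 1)) (hgc : ¬ ∃ c, ∀ x ∈ sphere (0 : E) 1, g x = c)
    (h : ∀ u : E, u ≠ 0 → ReflectionInvariant f u ∨ ReflectionInvariant g u) :
    ∃ c, ∀ x ∈ sphere (0 : E) 1, f x = c := by
  have hex : ∃ u : E, u ≠ 0 ∧ ¬ ReflectionInvariant g u := by
    by_contra! hcon
    by_cases hne : ∃ a : E, ‖a‖ = 1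
    · obtain ⟨a, ha⟩ := hne
      exact hgc (exists_const_of_reflectionInvariant ha hcon)
    · exact hgc ⟨0, fun x hx => (hne ⟨x, by simpa using hx⟩).elim⟩
  obtain ⟨u, hu0, hu⟩ := hex
  have hun : ‖u‖⁻¹ ≠ 0 := by simpa using hu0
  have ha : ‖‖u‖⁻¹ • u‖ = 1 := by rw [norm_smul]; simp [hu0]
  rw [← reflectionInvariant_smul_iff hun] at hu
  set a := ‖u‖⁻¹ • u
  have ha0 : a ≠ 0 := by rw [← norm_ne_zero_iff, ha]; norm_num
  refine exists_const_of_reflectionInvariant ha fun v hv =>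
    reflectionInvariant_of_eventually ha ?_ hv
  simp only [ReflectionInvariant, not_forall] at hu
  obtain ⟨x, hx, hxne⟩ := hu
  filter_upwards [(hg.tendsto_comp_hyperplaneReflection (v := id) continuousAt_id ha0
    hx).eventually_ne hxne, eventually_ne_nhds ha0] with b hb hb0
  exact (h b hb0).resolve_right fun hi => hb (hi x hx)

/-- If `f` dominates towards every `u` in an open half space with pole `p`, then `f x` increases
with `⟪x, p⟫`. -/
theorem le_of_inner_le_of_dominatesToward {f : E → ℝ} (hf : ContinuousOn f (sphere 0 1)) {p : E}
    (hp : p ≠ 0) (h : ∀ u : E, 0 < ⟪p, u⟫ → DominatesToward f u) {x y : E}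
    (hx : x ∈ sphere (0 : E) 1) (hy : y ∈ sphere (0 : E) 1) (hxy : ⟪y, p⟫ ≤ ⟪x, p⟫) :
    f y ≤ f x := by
  have hx1 : ‖x‖ = 1 := by simpa using hx
  have hy1 : ‖y‖ = 1 := by simpa using hy
  by_cases hne : x = y
  · rw [hne]
  have hw0 : x - y + (0 : ℝ) • p ≠ 0 := by simpa [sub_eq_zero] using hne
  have hcont : Continuous (fun ε : ℝ => x - y + ε • p) := by fun_prop
  have hlim := hf.tendsto_comp_hyperplaneReflection (t := (0 : ℝ)) hcont.continuousAt hw0 hx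
  rw [zero_smul, add_zero, hyperplaneReflection_sub (hx1.trans hy1.symm)] at hlim
  have hpos : 0 < ⟪x, x - y + (0 : ℝ) • p⟫ := by
    have := (inner_lt_one_iff_real_of_norm_eq_one hx1 hy1).2 hne
    simp only [zero_smul, add_zero, inner_sub_right, real_inner_self_eq_norm_sq, hx1]
    linarith
  have hev : ∀ᶠ ε : ℝ in 𝓝 0, 0 < ⟪x, x - y + ε • p⟫ :=
    (continuous_const.inner hcont).continuousAt.eventually_const_lt hpos
  refine le_of_tendsto (hlim.mono_left nhdsWithin_le_nhds : Tendsto _ (𝓝[>] (0 : ℝ)) _) ?_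
  filter_upwards [nhdsWithin_le_nhds hev, self_mem_nhdsWithin] with ε hε hε0
  refine h _ ?_ x hx hε.le
  have hpp : 0 < ⟪p, p⟫ := real_inner_self_pos.2 hp
  have : 0 < ε * ⟪p, p⟫ := mul_pos hε0 hpp
  rw [inner_add_right, inner_sub_right, real_inner_smul_right, real_inner_comm x p,
    real_inner_comm y p]
  linarith

/-- A function on the sphere which increases with `⟪x, p⟫` is an increasing function
of `⟪x, p⟫`. -/
theorem exists_monotoneOn_profile {f : E → ℝ} {p : E} (hp : ‖p‖ = 1)
    (h : ∀ x ∈ sphere (0 : E) 1, ∀ y ∈ sphere (0 : E) 1, ⟪y, p⟫ ≤ ⟪x, p⟫ → f y ≤ f x) :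
    ∃ φ : ℝ → ℝ, MonotoneOn φ (Icc (-1 : ℝ) 1) ∧ ∀ x ∈ sphere (0 : E) 1, f x = φ ⟪x, p⟫ := by
  have hpp : ⟪p, p⟫ = 1 := by rw [real_inner_self_eq_norm_sq, hp]; norm_num
  have hps : p ∈ sphere (0 : E) 1 := by simpa using hp
  have hle : ∀ z ∈ sphere (0 : E) 1, ⟪z, p⟫ ≤ 1 := by
    intro z hz
    have hz1 : ‖z‖ = 1 := by simpa using hz
    simpa [hz1, hp] using real_inner_le_norm z p
  refine ⟨fun t => sSup (f '' {z ∈ sphere (0 : E) 1 | ⟪z, p⟫ ≤ t}), ?_, ?_⟩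
  · intro s hs t _ hst
    refine csSup_le_csSup ⟨f p, ?_⟩ ⟨f (-p), mem_image_of_mem f ⟨by simpa using hp, ?_⟩⟩ ?_
    · rintro _ ⟨z, hz, rfl⟩
      exact h p hps z hz.1 (by rw [hpp]; exact hle z hz.1)
    · rw [inner_neg_left, hpp]
      exact hs.1
    · exact image_mono fun z hz => ⟨hz.1, hz.2.trans hst⟩
  · intro x hx
    have hmem : x ∈ {z ∈ sphere (0 : E) 1 | ⟪z, p⟫ ≤ ⟪x, p⟫} := ⟨hx, le_rfl⟩
    refine (IsGreatest.csSup_eq ⟨mem_image_of_mem f hmem, ?_⟩).symm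
    rintro _ ⟨z, hz, rfl⟩
    exact h x hx z hz.1 hz.2

/-- A compactly supported continuous function on `E` that on every small sphere is a positive
multiple of a rescaling of `f`. -/
def coneExtension (f : E → ℝ) (x : E) : ℝ :=
  max 0 (1 - ‖x‖) * (‖x‖ * f (‖x‖⁻¹ • x))

theorem coneExtension_le_coneExtension {f : E → ℝ} {x y : E} (hxy : ‖x‖ = ‖y‖)
    (h : f (‖x‖⁻¹ • x) ≤ f (‖x‖⁻¹ • y)) : coneExtension f x ≤ coneExtension f y := by
  unfold coneExtension
  rw [← hxy]
  gcongr

theorem inv_norm_smul_mem_sphere {x : E} (hx : x ≠ 0) : ‖x‖⁻¹ • x ∈ sphere (0 : E) 1 := by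
  rw [mem_sphere_zero_iff_norm, norm_smul]
  simp [hx]

theorem continuous_coneExtension [FiniteDimensional ℝ E] {f : E → ℝ}
    (hf : ContinuousOn f (sphere 0 1)) : Continuous (coneExtension f) := by
  refine Continuous.mul (by fun_prop) ?_
  rw [continuous_iff_continuousAt]
  intro x
  by_cases hx : x = 0
  · subst hx
    obtain ⟨C, hC⟩ := (isCompact_sphere (0 : E) 1).exists_bound_of_continuousOn hf
    have hlim : Tendsto (fun y : E => ‖y‖ * C) (𝓝 0) (𝓝 0) := by
      have : Continuous (fun y : E => ‖y‖ * C) := by fun_prop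
      simpa using this.tendsto 0
    rw [ContinuousAt, norm_zero, zero_mul]
    refine squeeze_zero_norm (fun y => ?_) hlim
    by_cases hy : y = 0
    · simp [hy]
    · rw [norm_mul, norm_norm]
      gcongr
      exact hC _ (inv_norm_smul_mem_sphere hy)
  · have hx' : ‖x‖ ≠ 0 := norm_ne_zero_iff.2 hx
    refine continuous_norm.continuousAt.mul ?_
    refine (hf _ (inv_norm_smul_mem_sphere hx)).tendsto.comp (tendsto_nhdsWithin_iff.2 ⟨?_, ?_⟩)
    · exact (continuous_norm.continuousAt.inv₀ hx').smul continuousAt_id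
    · filter_upwards [eventually_ne_nhds hx] with y hy using inv_norm_smul_mem_sphere hy

theorem hasCompactSupport_coneExtension [FiniteDimensional ℝ E] (f : E → ℝ) :
    HasCompactSupport (coneExtension f) := by
  refine HasCompactSupport.intro (isCompact_closedBall (0 : E) 1) fun x hx => ?_
  have : 1 < ‖x‖ := by simpa using hx
  rw [coneExtension, max_eq_left (by linarith), zero_mul]

theorem DominatesToward.coneExtension_le {f : E → ℝ} {u : E} (h : DominatesToward f u) {x : E}
    (hx : 0 ≤ ⟪x, u⟫) : coneExtension f (hyperplaneReflection u x) ≤ coneExtension f x := by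
  by_cases hx0 : x = 0
  · simp [hx0]
  refine coneExtension_le_coneExtension (by simp) ?_
  rw [LinearIsometryEquiv.norm_map, ← map_smul]
  refine h _ (inv_norm_smul_mem_sphere hx0) ?_
  rw [real_inner_smul_left]
  positivity

theorem DominatesToward.integrand_nonneg {f : E → ℝ} {u : E} (h : DominatesToward f u) (x : E) :
    0 ≤ (coneExtension f x - coneExtension f (hyperplaneReflection u x)) * ⟪x, u⟫ := by
  rcases le_total 0 ⟪x, u⟫ with hx | hx
  · exact mul_nonneg (sub_nonneg.2 (h.coneExtension_le hx)) hx
  · have := h.coneExtension_le (x := hyperplaneReflection u x)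
      (by rw [inner_hyperplaneReflection_self]; linarith)
    rw [hyperplaneReflection_involutive] at this
    exact mul_nonneg_of_nonpos_of_nonpos (by linarith) hx

theorem dominatesToward_or {f g : E → ℝ}
    (h : ∀ u : E, ‖u‖ = 1 → ∀ x ∈ sphere (0 : E) 1, ∀ y ∈ sphere (0 : E) 1,
      0 ≤ ⟪x, u⟫ → 0 ≤ ⟪y, u⟫ →
        0 ≤ (f x - f (x - (2 * ⟪x, u⟫) • u)) * (g y - g (y - (2 * ⟪y, u⟫) • u)))
    {u : E} (hu : u ≠ 0) : DominatesToward f u ∨ DominatesToward g (-u) := by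
  by_contra! hcon
  obtain ⟨h1, h2⟩ := hcon
  simp only [DominatesToward, not_forall, not_le] at h1 h2
  obtain ⟨x, hx, hxu, hfx⟩ := h1
  obtain ⟨y, hy, hyu, hgy⟩ := h2
  rw [hyperplaneReflection_neg] at hgy
  have hun : 0 < ‖u‖ := norm_pos_iff.2 hu
  have ha : ‖‖u‖⁻¹ • u‖ = 1 := by simpa using inv_norm_smul_mem_sphere hu
  have hR : ∀ z : E, z - (2 * ⟪z, ‖u‖⁻¹ • u⟫) • (‖u‖⁻¹ • u) = hyperplaneReflection u z := by
    intro z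
    rw [← hyperplaneReflection_smul (inv_ne_zero hun.ne') u, hyperplaneReflection_apply, ha]
    simp
  have hRy : 0 ≤ ⟪hyperplaneReflection u y, u⟫ := by
    rw [inner_hyperplaneReflection_self]
    simpa using hyu
  have := h _ ha x hx (hyperplaneReflection u y) (hyperplaneReflection_mem_sphere hy)
    (by rw [real_inner_smul_right]; positivity) (by rw [real_inner_smul_right]; positivity)
  rw [hR, hR, hyperplaneReflection_involutive] at this
  nlinarith [mul_pos (sub_pos.2 hfx) (sub_pos.2 hgy)]

theorem inv_norm_smul_eq_of_inner {p q : E} (hp : p ≠ 0) (hq : q ≠ 0)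
    (h : ∀ u : E, u ≠ 0 → ⟪p, u⟫ < 0 → ⟪q, u⟫ ≤ 0) : ‖p‖⁻¹ • p = ‖q‖⁻¹ • q := by
  have hp1 : ‖‖p‖⁻¹ • p‖ = 1 := by simpa using inv_norm_smul_mem_sphere hp
  have hq1 : ‖‖q‖⁻¹ • q‖ = 1 := by simpa using inv_norm_smul_mem_sphere hq
  by_contra hne
  have hlt := (inner_lt_one_iff_real_of_norm_eq_one hp1 hq1).2 hne
  set a := ‖p‖⁻¹ • p with ha
  set b := ‖q‖⁻¹ • q with hb
  have hpa : p = ‖p‖ • a := by rw [ha, smul_inv_smul₀ (norm_ne_zero_iff.2 hp)]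
  have hqb : q = ‖q‖ • b := by rw [hb, smul_inv_smul₀ (norm_ne_zero_iff.2 hq)]
  have hpn : 0 < ‖p‖ := norm_pos_iff.2 hp
  have hqn : 0 < ‖q‖ := norm_pos_iff.2 hq
  have h1 : ⟪p, b - a⟫ < 0 := by
    rw [hpa, real_inner_smul_left, inner_sub_right, real_inner_self_eq_norm_sq, hp1]
    exact mul_neg_of_pos_of_neg hpn (by linarith)
  have h2 : 0 < ⟪q, b - a⟫ := by
    rw [hqb, real_inner_smul_left, inner_sub_right, real_inner_self_eq_norm_sq, hq1,
      real_inner_comm]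
    exact mul_pos hqn (by linarith)
  exact absurd (h _ (sub_ne_zero.2 (Ne.symm hne)) h1) (not_le.2 h2)

variable [FiniteDimensional ℝ E] [MeasurableSpace E] [BorelSpace E]

/-- The center of mass of the density `coneExtension f`. -/
def centerOfMass (f : E → ℝ) : E := ∫ x, coneExtension f x • x

theorem inner_centerOfMass {f : E → ℝ} (hf : ContinuousOn f (sphere 0 1)) (u : E) :
    ⟪centerOfMass f, u⟫ = ∫ x, coneExtension f x * ⟪x, u⟫ := by
  have hint : Integrable (fun x : E => coneExtension f x • x) :=
    ((continuous_coneExtension hf).smul continuous_id).integrable_of_hasCompactSupport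
      (hasCompactSupport_coneExtension f).smul_right
  rw [centerOfMass, real_inner_comm, ← integral_inner hint]
  simp only [real_inner_smul_right, real_inner_comm u]

theorem two_mul_inner_centerOfMass {f : E → ℝ} (hf : ContinuousOn f (sphere 0 1)) (u : E) :
    2 * ⟪centerOfMass f, u⟫ =
      ∫ x, (coneExtension f x - coneExtension f (hyperplaneReflection u x)) * ⟪x, u⟫ := by
  have hc := continuous_coneExtension hf
  have hs := hasCompactSupport_coneExtension f
  have h1 : Integrable (fun x : E => coneExtension f x * ⟪x, u⟫) :=
    (by fun_prop : Continuous _).integrable_of_hasCompactSupport hs.mul_right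
  have hmp := (hyperplaneReflection u).measurePreserving
  have hme := (hyperplaneReflection u).toHomeomorph.measurableEmbedding
  have h2 : ∀ x, coneExtension f (hyperplaneReflection u x) * ⟪x, u⟫ =
      -(coneExtension f (hyperplaneReflection u x) * ⟪hyperplaneReflection u x, u⟫) := by
    intro x
    rw [inner_hyperplaneReflection_self]
    ring
  have h3 : Integrable (fun x : E => coneExtension f (hyperplaneReflection u x) * ⟪x, u⟫) := by
    simp only [h2]
    exact ((hmp.integrable_comp_emb hme).2 h1).neg
  have h4 : ∫ x, coneExtension f (hyperplaneReflection u x) * ⟪x, u⟫ =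
      -⟪centerOfMass f, u⟫ := by
    simp only [h2]
    rw [integral_neg, inner_centerOfMass hf]
    congr 1
    exact hmp.integral_comp hme fun x => coneExtension f x * ⟪x, u⟫
  simp only [sub_mul]
  rw [integral_sub h1 h3, h4, inner_centerOfMass hf]
  ring

theorem DominatesToward.inner_centerOfMass_nonneg {f : E → ℝ} (hf : ContinuousOn f (sphere 0 1))
    {u : E} (h : DominatesToward f u) : 0 ≤ ⟪centerOfMass f, u⟫ := by
  have := integral_nonneg (μ := volume) (Pi.le_def.2 h.integrand_nonneg)
  rw [← two_mul_inner_centerOfMass hf] at this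
  linarith

theorem DominatesToward.reflectionInvariant_of_inner_eq_zero {f : E → ℝ}
    (hf : ContinuousOn f (sphere 0 1)) {u : E} (h : DominatesToward f u)
    (h0 : ⟪centerOfMass f, u⟫ = 0) : ReflectionInvariant f u := by
  intro x hx
  have hx1 : ‖x‖ = 1 := by simpa using hx
  by_contra hne
  have hc := continuous_coneExtension hf
  have hs := hasCompactSupport_coneExtension f
  have hsR : HasCompactSupport fun x => coneExtension f (hyperplaneReflection u x) :=
    hs.comp_homeomorph (hyperplaneReflection u).toHomeomorph
  have hxu : ⟪x, u⟫ ≠ 0 := by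
    intro hxu
    apply hne
    rw [hyperplaneReflection_apply, hxu]
    simp
  have hval : ∀ y : E, ‖y‖ = 1 → coneExtension f ((1 / 2 : ℝ) • y) = 1 / 4 * f y := by
    intro y hy
    have hn : ‖(1 / 2 : ℝ) • y‖ = 1 / 2 := by rw [norm_smul, hy]; norm_num
    rw [coneExtension, hn, smul_smul]
    norm_num
    ring
  have hpos := Continuous.integral_pos_of_hasCompactSupport_nonneg_nonzero (μ := volume)
    (f := fun x => (coneExtension f x - coneExtension f (hyperplaneReflection u x)) * ⟪x, u⟫)
    (x := (1 / 2 : ℝ) • x) (by fun_prop) (hs.sub hsR).mul_right h.integrand_nonneg ?_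
  · rw [← two_mul_inner_centerOfMass hf, h0] at hpos
    simp at hpos
  · rw [map_smul, hval x hx1, hval _ (by simpa using hx1), real_inner_smul_left]
    refine mul_ne_zero ?_ (mul_ne_zero (by norm_num) hxu)
    intro h
    exact hne (by linarith)

theorem centerOfMass_ne_zero {f g : E → ℝ} (hf : ContinuousOn f (sphere 0 1))
    (hg : ContinuousOn g (sphere 0 1))
    (hfc : ¬ ∃ c, ∀ x ∈ sphere (0 : E) 1, f x = c) (hgc : ¬ ∃ c, ∀ x ∈ sphere (0 : E) 1, g x = c)
    (h : ∀ u : E, u ≠ 0 → DominatesToward f u ∨ DominatesToward g (-u)) :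
    centerOfMass f ≠ 0 := by
  intro h0
  refine hfc (exists_const_of_forall_reflectionInvariant_or hg hgc fun u hu => ?_)
  by_cases h1 : DominatesToward f u
  · exact .inl (h1.reflectionInvariant_of_inner_eq_zero hf (by simp [h0]))
  by_cases h2 : DominatesToward f (-u)
  · have := h2.reflectionInvariant_of_inner_eq_zero hf (by simp [h0])
    rw [← neg_one_smul ℝ, reflectionInvariant_smul_iff (by norm_num)] at this
    exact .inl this
  have h3 := (h u hu).resolve_left h1
  have h4 := (h (-u) (neg_ne_zero.2 hu)).resolve_left h2
  rw [neg_neg] at h4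
  exact .inr (h4.reflectionInvariant h3)

theorem dominatesToward_of_inner_pos {f g : E → ℝ} (hg : ContinuousOn g (sphere 0 1))
    (h : ∀ u : E, u ≠ 0 → DominatesToward f u ∨ DominatesToward g (-u)) {u : E}
    (hu : 0 < ⟪centerOfMass g, u⟫) : DominatesToward f u := by
  have hu0 : u ≠ 0 := by
    rintro rfl
    simp at hu
  refine (h u hu0).resolve_right fun hn => ?_
  have := hn.inner_centerOfMass_nonneg hg
  rw [inner_neg_right] at this
  linarith

end Reflections

/-- If non-constant `f, g ∈ C(Sⁿ)` satisfy, for every half space `H = {x : x·u ≥ 0}` and all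
`x, y ∈ Sⁿ ∩ H`, `(f(x) - f(Rx))(g(y) - g(Ry)) ≥ 0` where `R` is the reflection in `∂H`,
then `f` and `g` are radial symmetric and decreasing with respect to the same point. -/
theorem stmt_7 (n : ℕ) (f g : EuclideanSpace ℝ (Fin (n + 1)) → ℝ)
    (hf : ContinuousOn f (sphere (0 : EuclideanSpace ℝ (Fin (n + 1))) 1))
    (hg : ContinuousOn g (sphere (0 : EuclideanSpace ℝ (Fin (n + 1))) 1))
    (hfc : ¬ ∃ c : ℝ, ∀ x ∈ sphere (0 : EuclideanSpace ℝ (Fin (n + 1))) 1, f x = c)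
    (hgc : ¬ ∃ c : ℝ, ∀ x ∈ sphere (0 : EuclideanSpace ℝ (Fin (n + 1))) 1, g x = c)
    (h : ∀ u : EuclideanSpace ℝ (Fin (n + 1)), ‖u‖ = 1 →
      ∀ x ∈ sphere (0 : EuclideanSpace ℝ (Fin (n + 1))) 1,
      ∀ y ∈ sphere (0 : EuclideanSpace ℝ (Fin (n + 1))) 1,
        0 ≤ ⟪x, u⟫ → 0 ≤ ⟪y, u⟫ →
        0 ≤ (f x - f (x - (2 * ⟪x, u⟫) • u)) * (g y - g (y - (2 * ⟪y, u⟫) • u))) :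
    ∃ p ∈ sphere (0 : EuclideanSpace ℝ (Fin (n + 1))) 1,
      (∃ φ : ℝ → ℝ, MonotoneOn φ (Icc (-1 : ℝ) 1) ∧
        ∀ x ∈ sphere (0 : EuclideanSpace ℝ (Fin (n + 1))) 1, f x = φ ⟪x, p⟫) ∧
      (∃ ψ : ℝ → ℝ, MonotoneOn ψ (Icc (-1 : ℝ) 1) ∧
        ∀ x ∈ sphere (0 : EuclideanSpace ℝ (Fin (n + 1))) 1, g x = ψ ⟪x, p⟫) := by
  have hfg := fun (u : EuclideanSpace ℝ (Fin (n + 1))) (hu : u ≠ 0) => dominatesToward_or h hu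
  have hgf : ∀ u : EuclideanSpace ℝ (Fin (n + 1)), u ≠ 0 →
      DominatesToward g u ∨ DominatesToward f (-u) := fun u hu => by
    simpa [or_comm] using hfg (-u) (neg_ne_zero.2 hu)
  have hp := centerOfMass_ne_zero hf hg hfc hgc hfg
  have hq := centerOfMass_ne_zero hg hf hgc hfc hgf
  have hpq := inv_norm_smul_eq_of_inner hp hq fun u hu hlt => by
    by_contra! hpos
    exact hlt.not_ge ((dominatesToward_of_inner_pos hg hfg hpos).inner_centerOfMass_nonneg hf)
  have hmem := inv_norm_smul_mem_sphere hp
  set p := ‖centerOfMass f‖⁻¹ • centerOfMass f with hpdef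
  have hp1 : ‖p‖ = 1 := by simpa using hmem
  have hp0 : p ≠ 0 := by rw [← norm_ne_zero_iff, hp1]; norm_num
  have hposf : ∀ u, 0 < ⟪p, u⟫ → 0 < ⟪centerOfMass f, u⟫ := fun u hu => by
    rw [hpdef, real_inner_smul_left] at hu
    exact pos_of_mul_pos_right hu (by positivity)
  have hposg : ∀ u, 0 < ⟪p, u⟫ → 0 < ⟪centerOfMass g, u⟫ := fun u hu => by
    rw [hpq, real_inner_smul_left] at hu
    exact pos_of_mul_pos_right hu (by positivity)
  exact ⟨p, hmem,
    exists_monotoneOn_profile hp1 fun x hx y hy => le_of_inner_le_of_dominatesToward hf hp0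
      (fun u hu => dominatesToward_of_inner_pos hg hfg (hposg u hu)) hx hy,
    exists_monotoneOn_profile hp1 fun x hx y hy => le_of_inner_le_of_dominatesToward hg hp0
      (fun u hu => dominatesToward_of_inner_pos hf hgf (hposf u hu)) hx hy⟩
end
end

section
/- Let $k$ be a bounded strictly increasing function on $[-1,1]$ and $f, g \in C(S^n, \mathbb{R})$ non-constant functions satisfying the equality $\int_{S^n}\int_{S^n} k(x\cdot y) f(x) g(y)\, d\mu(x) d\mu(y) = \int_{S^n}\int_{S^n} k(x\cdot y) f^*(x) g^*(y)\, d\mu(x) d\mu(y)$, where $f^*, g^*$ are the symmetric decreasing rearrangements of $f, g$ on the sphere. Then $f$ and $g$ are radial symmetric and decreasing with respect to the same point. -/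
open MeasureTheory Metric Set
open scoped RealInnerProductSpace

noncomputable section

section SphereReflection

open Filter Topology

variable {E : Type*} [NormedAddCommGroup E] [InnerProductSpace ℝ E]

/-- The reflection of the unit sphere in the hyperplane orthogonal to `u`. -/
def sphereReflection (u : E) (x : sphere (0 : E) 1) : sphere (0 : E) 1 :=
  ⟨(ℝ ∙ u)ᗮ.reflection x, by simp⟩

lemma coe_sphereReflection (u : E) (x : sphere (0 : E) 1) :
    (sphereReflection u x : E) = x - (2 * (⟪u, (x : E)⟫ / ⟪u, u⟫)) • u := by
  simp only [sphereReflection, Submodule.reflection_orthogonal_apply,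
    Submodule.reflection_singleton_apply, real_inner_self_eq_norm_sq]
  simp [mul_smul, two_smul]

@[simp]
lemma sphereReflection_sphereReflection (u : E) (x : sphere (0 : E) 1) :
    sphereReflection u (sphereReflection u x) = x := by
  ext; simp [sphereReflection]

lemma inner_sphereReflection_sphereReflection (u : E) (x y : sphere (0 : E) 1) :
    ⟪(sphereReflection u x : E), (sphereReflection u y : E)⟫ = ⟪(x : E), (y : E)⟫ := by
  simp [sphereReflection]

lemma inner_sphereReflection_left (u : E) (x y : sphere (0 : E) 1) :
    ⟪(sphereReflection u x : E), (y : E)⟫ = ⟪(x : E), (sphereReflection u y : E)⟫ := by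
  conv_rhs => rw [← inner_sphereReflection_sphereReflection u]
  simp

lemma inner_sphereReflection_self (u : E) (x : sphere (0 : E) 1) :
    ⟪u, (sphereReflection u x : E)⟫ = -⟪u, (x : E)⟫ := by
  rw [coe_sphereReflection]
  by_cases hu : u = 0
  · simp [hu]
  have : ⟪u, u⟫ ≠ 0 := by simpa using hu
  rw [inner_sub_right, inner_smul_right]
  field_simp
  ring

lemma inner_sphereReflection_right (u v : E) (x : sphere (0 : E) 1) :
    ⟪v, (sphereReflection u x : E)⟫ =
      ⟪v, (x : E)⟫ - 2 * (⟪u, (x : E)⟫ / ⟪u, u⟫) * ⟪v, u⟫ := by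
  rw [coe_sphereReflection, inner_sub_right, inner_smul_right]

lemma sphereReflection_eq_self {u : E} {x : sphere (0 : E) 1} (h : ⟪u, (x : E)⟫ = 0) :
    sphereReflection u x = x := by
  ext; simp [coe_sphereReflection, h]

lemma sphereReflection_neg (u : E) (x : sphere (0 : E) 1) :
    sphereReflection (-u) x = sphereReflection u x := by
  ext; simp [coe_sphereReflection, neg_div]

lemma sphereReflection_sub (x y : sphere (0 : E) 1) :
    sphereReflection ((x : E) - y) x = y := by
  ext; exact Submodule.reflection_sub (by simp)

lemma isometry_sphereReflection (u : E) : Isometry (sphereReflection u) := by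
  refine Isometry.of_dist_eq fun x y => ?_
  simp [sphereReflection, Subtype.dist_eq]

@[fun_prop]
lemma continuous_sphereReflection (u : E) : Continuous (sphereReflection u) :=
  (isometry_sphereReflection u).continuous

/-- The reflection of the unit sphere as an isometric equivalence. -/
def sphereReflectionEquiv (u : E) : sphere (0 : E) 1 ≃ᵢ sphere (0 : E) 1 where
  toFun := sphereReflection u
  invFun := sphereReflection u
  left_inv := sphereReflection_sphereReflection u
  right_inv := sphereReflection_sphereReflection u
  isometry_toFun := isometry_sphereReflection u

lemma continuousAt_sphereReflection_left (x : sphere (0 : E) 1) {u : E} (hu : u ≠ 0) :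
    ContinuousAt (fun v : E => sphereReflection v x) u := by
  rw [Topology.IsEmbedding.subtypeVal.continuousAt_iff]
  change ContinuousAt (fun v : E => (sphereReflection v x : E)) u
  simp only [coe_sphereReflection]
  have : ⟪u, u⟫ ≠ 0 := by simpa using hu
  fun_prop (disch := assumption)

/-- `IsPolarized u F` says that `F` is at least as large on the open half sphere with pole `u` as
at the mirror points. -/
def IsPolarized (u : E) (F : sphere (0 : E) 1 → ℝ) : Prop :=
  ∀ x : sphere (0 : E) 1, 0 < ⟪u, (x : E)⟫ → F (sphereReflection u x) ≤ F x

lemma inner_sub_pos_of_ne {x y : sphere (0 : E) 1} (h : x ≠ y) :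
    0 < ⟪(x : E) - y, (x : E)⟫ := by
  have h1 : ⟪(x : E) - y, (x : E) - y⟫ > 0 := by
    rw [gt_iff_lt, real_inner_self_pos, sub_ne_zero]
    simpa [Subtype.ext_iff] using h
  have hx : ⟪(x : E), (x : E)⟫ = 1 := by simp
  have hy : ⟪(y : E), (y : E)⟫ = 1 := by simp
  rw [inner_sub_left] at h1 ⊢
  rw [inner_sub_right, inner_sub_right, hx, hy, real_inner_comm] at h1
  rw [hx]
  linarith

lemma le_of_inner_le_of_isPolarized {F : C(sphere (0 : E) 1, ℝ)} {p : E} (hp : p ≠ 0)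
    (h : ∀ u : E, 0 < ⟪u, p⟫ → IsPolarized u F) {x y : sphere (0 : E) 1}
    (hxy : ⟪(y : E), p⟫ ≤ ⟪(x : E), p⟫) : F y ≤ F x := by
  by_cases hne : x = y
  · rw [hne]
  have hne' : (x : E) - y ≠ 0 := by rw [sub_ne_zero]; simpa [Subtype.ext_iff] using hne
  have hpp : 0 < ⟪p, p⟫ := real_inner_self_pos.2 hp
  have hu : Tendsto (fun ε : ℝ => (x : E) - y + ε • p) (𝓝[>] 0) (𝓝 ((x : E) - y)) := by
    have : Continuous (fun ε : ℝ => (x : E) - y + ε • p) := by fun_prop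
    have := this.tendsto 0
    rw [zero_smul, add_zero] at this
    exact this.mono_left nhdsWithin_le_nhds
  have hF : Tendsto (fun ε : ℝ => F (sphereReflection ((x : E) - y + ε • p) x)) (𝓝[>] 0)
      (𝓝 (F y)) := by
    have h1 := ((continuousAt_sphereReflection_left x hne').tendsto.comp hu)
    rw [sphereReflection_sub] at h1
    exact (F.continuous.tendsto y).comp h1
  refine le_of_tendsto hF ?_
  have hpos : ∀ᶠ ε in 𝓝[>] (0 : ℝ), 0 < ⟪(x : E) - y + ε • p, (x : E)⟫ := by
    have : Tendsto (fun ε : ℝ => ⟪(x : E) - y + ε • p, (x : E)⟫) (𝓝[>] 0)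
      (𝓝 ⟪(x : E) - y, (x : E)⟫) := hu.inner tendsto_const_nhds
    exact this.eventually (lt_mem_nhds (inner_sub_pos_of_ne hne))
  filter_upwards [hpos, self_mem_nhdsWithin] with ε h1 h2
  refine h _ ?_ x h1
  rw [inner_add_left, inner_sub_left, inner_smul_left]
  have : 0 < ε * ⟪p, p⟫ := mul_pos h2 hpp
  simp only [conj_trivial]
  linarith

/-- The two-point symmetrization of `F` with respect to the half sphere with pole `u`. -/
def polarization (u : E) (F : C(sphere (0 : E) 1, ℝ)) : C(sphere (0 : E) 1, ℝ) where
  toFun x := if 0 ≤ ⟪u, (x : E)⟫ then max (F x) (F (sphereReflection u x))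
    else min (F x) (F (sphereReflection u x))
  continuous_toFun := by
    refine Continuous.if_le (by fun_prop) (by fun_prop) (by fun_prop) (by fun_prop) ?_
    intro x hx
    simp [sphereReflection_eq_self hx.symm]

lemma polarization_apply (u : E) (F : C(sphere (0 : E) 1, ℝ)) (x : sphere (0 : E) 1) :
    polarization u F x = if 0 ≤ ⟪u, (x : E)⟫ then max (F x) (F (sphereReflection u x))
    else min (F x) (F (sphereReflection u x)) := rfl

lemma polarization_pair (u : E) (F : C(sphere (0 : E) 1, ℝ)) (x : sphere (0 : E) 1) :
    (0 ≤ ⟪u, (x : E)⟫ ∧ polarization u F x = max (F x) (F (sphereReflection u x)) ∧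
      polarization u F (sphereReflection u x) = min (F x) (F (sphereReflection u x))) ∨
    (⟪u, (x : E)⟫ ≤ 0 ∧ polarization u F x = min (F x) (F (sphereReflection u x)) ∧
      polarization u F (sphereReflection u x) = max (F x) (F (sphereReflection u x))) := by
  simp only [polarization_apply, inner_sphereReflection_self, sphereReflection_sphereReflection]
  rcases lt_trichotomy ⟪u, (x : E)⟫ 0 with h | h | h
  · right
    simp [h.le, not_le.2 h, max_comm]
  · left
    simp [h, sphereReflection_eq_self h]
  · left
    simp [h.le, h, min_comm]

lemma polarization_add (u : E) (F : C(sphere (0 : E) 1, ℝ)) (x : sphere (0 : E) 1) :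
    polarization u F x + polarization u F (sphereReflection u x) =
      F x + F (sphereReflection u x) := by
  rcases polarization_pair u F x with ⟨-, h1, h2⟩ | ⟨-, h1, h2⟩ <;> rw [h1, h2]
  · exact max_add_min _ _
  · exact min_add_max _ _

lemma comp_polarization_add (φ : ℝ → ℝ) (u : E) (F : C(sphere (0 : E) 1, ℝ))
    (x : sphere (0 : E) 1) :
    φ (polarization u F x) + φ (polarization u F (sphereReflection u x)) =
      φ (F x) + φ (F (sphereReflection u x)) := by
  rcases polarization_pair u F x with ⟨-, h1, h2⟩ | ⟨-, h1, h2⟩ <;> rw [h1, h2] <;>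
  rcases le_total (F x) (F (sphereReflection u x)) with h | h <;> simp [h, add_comm]

lemma polarization_modulus (u : E) (F : C(sphere (0 : E) 1, ℝ)) {δ ε : ℝ}
    (h : ∀ x y, dist x y ≤ δ → |F x - F y| ≤ ε) (x y : sphere (0 : E) 1) (hxy : dist x y ≤ δ) :
    |polarization u F x - polarization u F y| ≤ ε := by
  set σ := sphereReflection u
  have hσ : dist (σ x) (σ y) ≤ δ := by rwa [(isometry_sphereReflection u).dist_eq]
  have key : 0 ≤ ⟪u, (x : E)⟫ * -⟪u, (y : E)⟫ → dist x (σ y) ≤ dist x y := by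
    intro hs
    rw [Subtype.dist_eq, Subtype.dist_eq, dist_eq_norm, dist_eq_norm]
    refine le_of_sq_le_sq ?_ (norm_nonneg _)
    rw [@norm_sub_sq_real, @norm_sub_sq_real, norm_eq_of_mem_sphere, norm_eq_of_mem_sphere,
      norm_eq_of_mem_sphere, inner_sphereReflection_right]
    have : 0 ≤ ⟪u, (x : E)⟫ * -⟪u, (y : E)⟫ / ⟪u, u⟫ := div_nonneg hs real_inner_self_nonneg
    have e : 2 * (⟪u, (y : E)⟫ / ⟪u, u⟫) * ⟪(x : E), u⟫ =
        -2 * (⟪u, (x : E)⟫ * -⟪u, (y : E)⟫ / ⟪u, u⟫) := by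
      rw [real_inner_comm u (x : E)]
      ring
    linarith
  have h1 := abs_le.1 (h x y hxy)
  have h2 := abs_le.1 (h _ _ hσ)
  have far : 0 ≤ ⟪u, (x : E)⟫ * -⟪u, (y : E)⟫ → |F x - F (σ y)| ≤ ε ∧ |F (σ x) - F y| ≤ ε := by
    intro hs
    refine ⟨h _ _ ((key hs).trans hxy), h _ _ ?_⟩
    have : dist (σ x) y = dist x (σ y) := by
      conv_rhs => rw [← (isometry_sphereReflection u).dist_eq]
      simp [σ]
    rw [this]
    exact (key hs).trans hxy
  simp only [abs_le] at far ⊢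
  rcases polarization_pair u F x with ⟨sx, hx, -⟩ | ⟨sx, hx, -⟩ <;>
  rcases polarization_pair u F y with ⟨sy, hy, -⟩ | ⟨sy, hy, -⟩ <;> rw [hx, hy]
  · constructor <;> grind
  · have := far (mul_nonneg sx (by linarith))
    constructor <;> grind
  · have := far (mul_nonneg_of_nonpos_of_nonpos sx (by linarith))
    constructor <;> grind
  · constructor <;> grind

end SphereReflection

lemma MonotoneOn.measurable_comp_Icc {Y : Type*} [MeasurableSpace Y] {φ : ℝ → ℝ} {a b : ℝ}
    (hab : a ≤ b) (hφ : MonotoneOn φ (Icc a b)) {g : Y → ℝ} (hg : Measurable g)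
    (hgI : ∀ y, g y ∈ Icc a b) : Measurable fun y => φ (g y) := by
  have h1 : Monotone (IccExtend hab (fun t : Icc a b => φ t)) :=
    Monotone.IccExtend hab fun x y hxy => hφ x.2 y.2 hxy
  have h2 : (fun y => φ (g y)) = fun y => IccExtend hab (fun t : Icc a b => φ t) (g y) := by
    ext y
    simp [IccExtend_of_mem hab _ (hgI y)]
  rw [h2]
  exact h1.measurable.comp hg

lemma MonotoneOn.exists_abs_le_Icc {φ : ℝ → ℝ} {a b : ℝ} (hab : a ≤ b)
    (hφ : MonotoneOn φ (Icc a b)) : ∃ C, ∀ t ∈ Icc a b, |φ t| ≤ C := by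
  refine ⟨max |φ a| |φ b|, fun t ht => abs_le_max_abs_abs ?_ ?_⟩
  · exact hφ (left_mem_Icc.2 hab) ht ht.1
  · exact hφ ht (right_mem_Icc.2 hab) ht.2

lemma continuous_integral_mul_continuousMap {Y : Type*} [TopologicalSpace Y] [CompactSpace Y]
    [MeasurableSpace Y] [OpensMeasurableSpace Y] (μ : Measure Y) [IsFiniteMeasure μ]
    {w : Y → ℝ} (hw : Measurable w) {C : ℝ} (hC : ∀ y, |w y| ≤ C) :
    Continuous fun H : C(Y, ℝ) => ∫ y, w y * H y ∂μ := by
  rw [continuous_iff_continuousAt]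
  intro H₀
  refine continuousAt_of_dominated (bound := fun _ => C * (‖H₀‖ + 1)) ?_ ?_
    (integrable_const _) ?_
  · exact .of_forall fun H =>
      (hw.mul H.continuous.measurable).aestronglyMeasurable
  · filter_upwards [Metric.ball_mem_nhds H₀ one_pos] with H hH
    refine .of_forall fun y => ?_
    rw [norm_mul, Real.norm_eq_abs]
    have h0 : 0 ≤ C := (abs_nonneg _).trans (hC y)
    have h1 : ‖H‖ ≤ ‖H₀‖ + 1 := by
      have := norm_le_norm_add_norm_sub' H H₀
      have h2 : ‖H - H₀‖ < 1 := by simpa [dist_eq_norm] using hH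
      linarith
    exact mul_le_mul (hC y) ((H.norm_coe_le_norm y).trans h1) (norm_nonneg _) h0
  · exact .of_forall fun y => by
      refine (continuous_const.mul (ContinuousEvalConst.continuous_eval_const y)).continuousAt

lemma integrable_of_abs_le {Y : Type*} [MeasurableSpace Y] {μ : Measure Y} [IsFiniteMeasure μ]
    {w : Y → ℝ} (hw : Measurable w) (C : ℝ) (hC : ∀ y, |w y| ≤ C) : Integrable w μ :=
  Integrable.of_bound hw.aestronglyMeasurable C (.of_forall hC)

lemma max_sub_min_mul_nonneg (a b c d : ℝ) :
    0 ≤ (max a b - min a b) * (max c d - min c d) - (a - b) * (c - d) := by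
  rw [max_sub_min_eq_abs', max_sub_min_eq_abs', ← abs_mul]
  exact sub_nonneg.2 (le_abs_self _)

lemma MeasureTheory.MeasurePreserving.integral_comp_of_integrable {Y : Type*} [MeasurableSpace Y]
    {ρ : Measure Y} {m : Y → Y} (hm : MeasurePreserving m ρ ρ) {T : Y → ℝ} (hT : Integrable T ρ) :
    ∫ z, T (m z) ∂ρ = ∫ z, T z ∂ρ := by
  rw [← integral_map hm.aemeasurable (by rw [hm.map_eq]; exact hT.aestronglyMeasurable), hm.map_eq]

section RieszForm

variable {E : Type*} [NormedAddCommGroup E] [InnerProductSpace ℝ E]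

lemma inner_mem_Icc_of_mem_sphere (x y : sphere (0 : E) 1) :
    ⟪(x : E), (y : E)⟫ ∈ Icc (-1 : ℝ) 1 := by
  have := abs_real_inner_le_norm (x : E) y
  simp only [norm_eq_of_mem_sphere, mul_one] at this
  exact abs_le.1 this

lemma kernel_sub_nonneg {k : ℝ → ℝ} (hk : MonotoneOn k (Icc (-1) 1)) {u : E}
    {x y : sphere (0 : E) 1} (h : 0 ≤ ⟪u, (x : E)⟫ * ⟪u, (y : E)⟫) :
    k ⟪(x : E), (sphereReflection u y : E)⟫ ≤ k ⟪(x : E), (y : E)⟫ := by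
  refine hk (inner_mem_Icc_of_mem_sphere _ _) (inner_mem_Icc_of_mem_sphere _ _) ?_
  rw [inner_sphereReflection_right, real_inner_comm u (x : E)]
  have : 0 ≤ ⟪u, (x : E)⟫ * ⟪u, (y : E)⟫ / ⟪u, u⟫ := div_nonneg h real_inner_self_nonneg
  have e : 2 * (⟪u, (y : E)⟫ / ⟪u, u⟫) * ⟪u, (x : E)⟫ =
    2 * (⟪u, (x : E)⟫ * ⟪u, (y : E)⟫ / ⟪u, u⟫) := by ring
  linarith

lemma kernel_sub_nonpos {k : ℝ → ℝ} (hk : MonotoneOn k (Icc (-1) 1)) {u : E}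
    {x y : sphere (0 : E) 1} (h : ⟪u, (x : E)⟫ * ⟪u, (y : E)⟫ ≤ 0) :
    k ⟪(x : E), (y : E)⟫ ≤ k ⟪(x : E), (sphereReflection u y : E)⟫ := by
  have := kernel_sub_nonneg hk (u := u) (x := x) (y := sphereReflection u y)
    (by rw [inner_sphereReflection_self]; linarith)
  simpa using this

lemma kernel_sub_pos {k : ℝ → ℝ} (hk : StrictMonoOn k (Icc (-1) 1)) {u : E}
    {x y : sphere (0 : E) 1} (h : 0 < ⟪u, (x : E)⟫ * ⟪u, (y : E)⟫) :
    k ⟪(x : E), (sphereReflection u y : E)⟫ < k ⟪(x : E), (y : E)⟫ := by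
  refine hk (inner_mem_Icc_of_mem_sphere _ _) (inner_mem_Icc_of_mem_sphere _ _) ?_
  rw [inner_sphereReflection_right, real_inner_comm u (x : E)]
  have hu : u ≠ 0 := by rintro rfl; simp at h
  have : 0 < ⟪u, (x : E)⟫ * ⟪u, (y : E)⟫ / ⟪u, u⟫ := div_pos h (real_inner_self_pos.2 hu)
  have e : 2 * (⟪u, (y : E)⟫ / ⟪u, u⟫) * ⟪u, (x : E)⟫ =
    2 * (⟪u, (x : E)⟫ * ⟪u, (y : E)⟫ / ⟪u, u⟫) := by ring
  linarith

/-- The sum of a function over the four combinations of reflecting the two variables. -/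
def reflectionSum (u : E) (T : sphere (0 : E) 1 × sphere (0 : E) 1 → ℝ)
    (z : sphere (0 : E) 1 × sphere (0 : E) 1) : ℝ :=
  T z + T (sphereReflection u z.1, z.2) +
    (T (z.1, sphereReflection u z.2) + T (sphereReflection u z.1, sphereReflection u z.2))

/-- The change of the integrand of the Riesz form under polarization. -/
def rieszGain (k : ℝ → ℝ) (u : E) (F G : C(sphere (0 : E) 1, ℝ))
    (z : sphere (0 : E) 1 × sphere (0 : E) 1) : ℝ :=
  k ⟪(z.1 : E), (z.2 : E)⟫ * (polarization u F z.1 * polarization u G z.2) -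
    k ⟪(z.1 : E), (z.2 : E)⟫ * (F z.1 * G z.2)

lemma reflectionSum_rieszGain (k : ℝ → ℝ) (u : E) (F G : C(sphere (0 : E) 1, ℝ))
    (z : sphere (0 : E) 1 × sphere (0 : E) 1) :
    reflectionSum u (rieszGain k u F G) z =
      (k ⟪(z.1 : E), (z.2 : E)⟫ - k ⟪(z.1 : E), (sphereReflection u z.2 : E)⟫) *
      (((polarization u F z.1 - polarization u F (sphereReflection u z.1)) *
        (polarization u G z.2 - polarization u G (sphereReflection u z.2)) -
        (F z.1 - F (sphereReflection u z.1)) * (G z.2 - G (sphereReflection u z.2))) / 2) := by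
  simp only [reflectionSum, rieszGain, inner_sphereReflection_left,
    sphereReflection_sphereReflection]
  have hF := polarization_add u F z.1
  have hG := polarization_add u G z.2
  rw [← eq_sub_iff_add_eq'] at hF hG
  rw [hF, hG]
  ring

lemma reflectionSum_rieszGain_nonneg {k : ℝ → ℝ} (hk : MonotoneOn k (Icc (-1) 1)) (u : E)
    (F G : C(sphere (0 : E) 1, ℝ)) (z : sphere (0 : E) 1 × sphere (0 : E) 1) :
    0 ≤ reflectionSum u (rieszGain k u F G) z := by
  rw [reflectionSum_rieszGain]
  have hmm := max_sub_min_mul_nonneg (F z.1) (F (sphereReflection u z.1)) (G z.2)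
    (G (sphereReflection u z.2))
  have hmm' := max_sub_min_mul_nonneg (F z.1) (F (sphereReflection u z.1))
    (G (sphereReflection u z.2)) (G z.2)
  rw [max_comm (G (sphereReflection u z.2)), min_comm (G (sphereReflection u z.2))] at hmm'
  rcases polarization_pair u F z.1 with ⟨sx, hx, hx'⟩ | ⟨sx, hx, hx'⟩ <;>
  rcases polarization_pair u G z.2 with ⟨sy, hy, hy'⟩ | ⟨sy, hy, hy'⟩ <;>
  rw [hx, hx', hy, hy']
  · have := kernel_sub_nonneg hk (mul_nonneg sx sy)
    exact mul_nonneg (by linarith) (by linarith)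
  · have := kernel_sub_nonpos hk (mul_nonpos_of_nonneg_of_nonpos sx sy)
    exact mul_nonneg_of_nonpos_of_nonpos (by linarith) (by linarith)
  · have := kernel_sub_nonpos hk (mul_nonpos_of_nonpos_of_nonneg sx sy)
    exact mul_nonneg_of_nonpos_of_nonpos (by linarith) (by linarith)
  · have := kernel_sub_nonneg hk (mul_nonneg_of_nonpos_of_nonpos sx sy)
    exact mul_nonneg (by linarith) (by linarith)

lemma two_mul_integral_eq_sphereReflection [MeasurableSpace E]
    {ν : Measure (sphere (0 : E) 1)} {u : E}
    (hν : MeasurePreserving (sphereReflection u) ν ν) {T : sphere (0 : E) 1 → ℝ}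
    (hT : Integrable T ν) :
    2 * ∫ x, T x ∂ν = ∫ x, (T x + T (sphereReflection u x)) ∂ν := by
  have := integral_add hT (hν.integrable_comp_of_integrable hT)
  simp only [Function.comp_apply] at this
  rw [this, hν.integral_comp_of_integrable hT]
  ring

variable [FiniteDimensional ℝ E] [MeasurableSpace E] [BorelSpace E]
  (ν : Measure (sphere (0 : E) 1))

lemma measurable_kernel {k : ℝ → ℝ} (hk : MonotoneOn k (Icc (-1) 1)) :
    Measurable fun z : sphere (0 : E) 1 × sphere (0 : E) 1 => k ⟪(z.1 : E), (z.2 : E)⟫ :=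
  hk.measurable_comp_Icc (by norm_num)
    (Continuous.measurable (by fun_prop)) fun z => inner_mem_Icc_of_mem_sphere z.1 z.2

/-- The bilinear form `∫∫ k(x·y) F(x) G(y)` on the sphere. -/
def rieszForm (k : ℝ → ℝ) (F G : sphere (0 : E) 1 → ℝ) : ℝ :=
  ∫ z : sphere (0 : E) 1 × sphere (0 : E) 1, k ⟪(z.1 : E), (z.2 : E)⟫ * (F z.1 * G z.2) ∂ν.prod ν

variable [IsFiniteMeasure ν]

lemma integrable_rieszForm {k : ℝ → ℝ} (hk : MonotoneOn k (Icc (-1) 1))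
    (F G : C(sphere (0 : E) 1, ℝ)) :
    Integrable (fun z : sphere (0 : E) 1 × sphere (0 : E) 1 =>
      k ⟪(z.1 : E), (z.2 : E)⟫ * (F z.1 * G z.2)) (ν.prod ν) := by
  obtain ⟨C, hC⟩ := hk.exists_abs_le_Icc (by norm_num)
  refine integrable_of_abs_le ((measurable_kernel hk).mul
    (Continuous.measurable (by fun_prop))) (C * (‖F‖ * ‖G‖)) fun z => ?_
  have h1 := hC _ (inner_mem_Icc_of_mem_sphere z.1 z.2)
  rw [abs_mul, abs_mul]
  have := (abs_nonneg _).trans h1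
  gcongr
  · exact F.norm_coe_le_norm _
  · exact G.norm_coe_le_norm _

lemma continuous_rieszForm {k : ℝ → ℝ} (hk : MonotoneOn k (Icc (-1) 1)) :
    Continuous fun p : C(sphere (0 : E) 1, ℝ) × C(sphere (0 : E) 1, ℝ) =>
      rieszForm ν k p.1 p.2 := by
  obtain ⟨C, hC⟩ := hk.exists_abs_le_Icc (by norm_num)
  have h := continuous_integral_mul_continuousMap (ν.prod ν) (measurable_kernel (E := E) hk)
    (C := C) fun z => hC _ (inner_mem_Icc_of_mem_sphere z.1 z.2)
  have h2 : Continuous fun p : C(sphere (0 : E) 1, ℝ) × C(sphere (0 : E) 1, ℝ) =>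
      (p.1.comp ContinuousMap.fst * p.2.comp ContinuousMap.snd :
        C(sphere (0 : E) 1 × sphere (0 : E) 1, ℝ)) := by
    fun_prop
  exact h.comp h2

variable {ν}

lemma integral_reflectionSum {u : E}
    (hν : MeasurePreserving (sphereReflection u) ν ν)
    {T : sphere (0 : E) 1 × sphere (0 : E) 1 → ℝ} (hT : Integrable T (ν.prod ν)) :
    Integrable (reflectionSum u T) (ν.prod ν) ∧
      ∫ z, reflectionSum u T z ∂ν.prod ν = 4 * ∫ z, T z ∂ν.prod ν := by
  have h1 := hν.prod (MeasurePreserving.id ν)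
  have h2 := (MeasurePreserving.id ν).prod hν
  have h3 := hν.prod hν
  have i1 := h1.integrable_comp_of_integrable hT
  have i2 := h2.integrable_comp_of_integrable hT
  have i3 := h3.integrable_comp_of_integrable hT
  have e1 := h1.integral_comp_of_integrable hT
  have e2 := h2.integral_comp_of_integrable hT
  have e3 := h3.integral_comp_of_integrable hT
  refine ⟨(hT.add i1).add (i2.add i3), ?_⟩
  have := integral_add (hT.add i1) (i2.add i3)
  rw [integral_add' hT i1, integral_add' i2 i3] at this
  simp only [Function.comp_def] at this
  rw [e1, e2, e3] at this
  refine Eq.trans this (by ring)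

lemma integrable_rieszGain {k : ℝ → ℝ} (hk : MonotoneOn k (Icc (-1) 1)) (u : E)
    (F G : C(sphere (0 : E) 1, ℝ)) : Integrable (rieszGain k u F G) (ν.prod ν) :=
  (integrable_rieszForm ν hk _ _).sub (integrable_rieszForm ν hk _ _)

lemma integral_rieszGain {k : ℝ → ℝ} (hk : MonotoneOn k (Icc (-1) 1)) (u : E)
    (F G : C(sphere (0 : E) 1, ℝ)) :
    ∫ z, rieszGain k u F G z ∂ν.prod ν =
      rieszForm ν k (polarization u F) (polarization u G) - rieszForm ν k F G :=
  integral_sub (integrable_rieszForm ν hk _ _) (integrable_rieszForm ν hk _ _)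

lemma rieszForm_le_polarization {k : ℝ → ℝ} (hk : MonotoneOn k (Icc (-1) 1)) {u : E}
    (hν : MeasurePreserving (sphereReflection u) ν ν) (F G : C(sphere (0 : E) 1, ℝ)) :
    rieszForm ν k F G ≤ rieszForm ν k (polarization u F) (polarization u G) := by
  have h1 := (integral_reflectionSum hν (integrable_rieszGain hk u F G)).2
  have h2 := integral_nonneg (μ := ν.prod ν) (f := reflectionSum u (rieszGain k u F G))
    (fun z => reflectionSum_rieszGain_nonneg hk u F G z)
  rw [integral_rieszGain hk] at h1
  linarith

lemma mul_sub_nonneg_of_rieszForm_polarization_le [ν.IsOpenPosMeasure] {k : ℝ → ℝ}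
    (hk : StrictMonoOn k (Icc (-1) 1)) {u : E}
    (hν : MeasurePreserving (sphereReflection u) ν ν) {F G : C(sphere (0 : E) 1, ℝ)}
    (h : rieszForm ν k (polarization u F) (polarization u G) ≤ rieszForm ν k F G)
    {x y : sphere (0 : E) 1} (hx : 0 < ⟪u, (x : E)⟫) (hy : 0 < ⟪u, (y : E)⟫) :
    0 ≤ (F x - F (sphereReflection u x)) * (G y - G (sphereReflection u y)) := by
  obtain ⟨h0, h1⟩ := integral_reflectionSum hν (integrable_rieszGain hk.monotoneOn u F G)
  have h2 := reflectionSum_rieszGain_nonneg hk.monotoneOn u F G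
  rw [integral_rieszGain hk.monotoneOn] at h1
  have h3 : ∫ z, reflectionSum u (rieszGain k u F G) z ∂ν.prod ν = 0 :=
    le_antisymm (by linarith) (integral_nonneg h2)
  rw [integral_eq_zero_iff_of_nonneg h2 h0] at h3
  by_contra! hneg
  let W : Set (sphere (0 : E) 1 × sphere (0 : E) 1) :=
    {z | 0 < ⟪u, (z.1 : E)⟫ ∧ 0 < ⟪u, (z.2 : E)⟫ ∧
      (F z.1 - F (sphereReflection u z.1)) * (G z.2 - G (sphereReflection u z.2)) < 0}
  have hW : IsOpen W := by
    simp only [W, ofPred_and]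
    refine IsOpen.inter ?_ (IsOpen.inter ?_ ?_) <;>
    exact isOpen_lt (by fun_prop) (by fun_prop)
  have hW0 : (ν.prod ν) W = 0 := by
    refine measure_mono_null ?_ (ae_iff.1 h3)
    rintro z ⟨sx, sy, hz⟩
    refine (?_ : 0 < reflectionSum u (rieszGain k u F G) z).ne'
    rw [reflectionSum_rieszGain]
    refine mul_pos (sub_pos.2 (kernel_sub_pos hk (mul_pos sx sy))) ?_
    have hpos : 0 ≤ (polarization u F z.1 - polarization u F (sphereReflection u z.1)) *
        (polarization u G z.2 - polarization u G (sphereReflection u z.2)) := by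
      rcases polarization_pair u F z.1 with ⟨-, hx, hx'⟩ | ⟨sx', -, -⟩
      · rcases polarization_pair u G z.2 with ⟨-, hy, hy'⟩ | ⟨sy', -, -⟩
        · rw [hx, hx', hy, hy']
          exact mul_nonneg (by simp) (by simp)
        · linarith
      · linarith
    linarith
  rw [hW.measure_eq_zero_iff (ν.prod ν)] at hW0
  have : (x, y) ∈ W := ⟨hx, hy, hneg⟩
  simp [hW0] at this

end RieszForm

section RieszInequality

open Filter Topology

/-- Continuous functions bounded by `M` whose modulus of continuity is at most that of `f` form
a compact set. -/
lemma isCompact_setOf_modulus_le {X : Type*} [PseudoMetricSpace X] [CompactSpace X]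
    (f : C(X, ℝ)) (M : ℝ) :
    IsCompact {F : C(X, ℝ) | (∀ x, |F x| ≤ M) ∧
      ∀ δ ε : ℝ, (∀ x y, dist x y ≤ δ → |f x - f y| ≤ ε) →
        ∀ x y, dist x y ≤ δ → |F x - F y| ≤ ε} := by
  have huc : ∀ ε > 0, ∃ δ > 0, ∀ x y, dist x y ≤ δ → |f x - f y| ≤ ε := by
    intro ε hε
    obtain ⟨δ, hδ, h⟩ := Metric.uniformContinuous_iff.1
      (CompactSpace.uniformContinuous_of_continuous f.continuous) ε hε
    refine ⟨δ / 2, by positivity, fun x y hxy => ?_⟩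
    have := h (a := x) (b := y) (by linarith)
    rw [Real.dist_eq] at this
    exact this.le
  have hmod : ∀ ε > 0, ∃ δ > 0, ∀ F : X → ℝ, (∀ δ ε : ℝ,
      (∀ x y, dist x y ≤ δ → |f x - f y| ≤ ε) → ∀ x y, dist x y ≤ δ → |F x - F y| ≤ ε) →
      ∀ x y, dist x y < δ → dist (F x) (F y) < ε := by
    intro ε hε
    obtain ⟨δ, hδ, h⟩ := huc (ε / 2) (by positivity)
    refine ⟨δ, hδ, fun F hF x y hxy => ?_⟩
    rw [Real.dist_eq]
    exact (hF δ (ε / 2) h x y hxy.le).trans_lt (by linarith)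
  refine ArzelaAscoli.isCompact_of_equicontinuous _ ?_ ?_
  · have himg : ContinuousMap.toFun '' {F : C(X, ℝ) | (∀ x, |F x| ≤ M) ∧
        ∀ δ ε : ℝ, (∀ x y, dist x y ≤ δ → |f x - f y| ≤ ε) →
          ∀ x y, dist x y ≤ δ → |F x - F y| ≤ ε} =
        (Set.univ.pi fun _ => Icc (-M) M) ∩ {F : X → ℝ |
          ∀ δ ε : ℝ, (∀ x y, dist x y ≤ δ → |f x - f y| ≤ ε) →
            ∀ x y, dist x y ≤ δ → |F x - F y| ≤ ε} := by
      ext F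
      constructor
      · rintro ⟨F, ⟨h1, h2⟩, rfl⟩
        exact ⟨fun x _ => abs_le.1 (h1 x), h2⟩
      · rintro ⟨h1, h2⟩
        refine ⟨⟨F, ?_⟩, ⟨fun x => abs_le.2 (h1 x trivial), h2⟩, rfl⟩
        refine Metric.continuous_iff.2 fun x ε hε => ?_
        obtain ⟨δ, hδ, h⟩ := hmod ε hε
        exact ⟨δ, hδ, fun y hy => h F h2 y x hy⟩
    rw [himg]
    refine (isCompact_univ_pi fun _ => isCompact_Icc).inter_right ?_
    simp only [ofPred_forall]
    refine isClosed_iInter fun δ => isClosed_iInter fun ε => isClosed_iInter fun _ =>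
      isClosed_iInter fun x => isClosed_iInter fun y => isClosed_iInter fun _ => ?_
    exact isClosed_le (by fun_prop) continuous_const
  · intro x₀
    rw [Metric.equicontinuousAt_iff_pair]
    intro ε hε
    obtain ⟨δ, hδ, h⟩ := hmod (ε) hε
    refine ⟨ball x₀ (δ / 2), Metric.ball_mem_nhds _ (by positivity), fun x hx y hy F => ?_⟩
    refine h _ F.2.2 x y ?_
    have := dist_triangle_right x y x₀
    rw [mem_ball] at hx hy
    linarith

/-- Equidistributed functions that are nondecreasing functions of the same real function agree
almost everywhere. -/
lemma ae_eq_of_monotone_of_measure_lt_eq {X : Type*} [MeasurableSpace X] {μ : Measure X}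
    [IsFiniteMeasure μ] {h F G : X → ℝ} (hFm : Measurable F) (hGm : Measurable G)
    (hF : ∀ x y, h y ≤ h x → F y ≤ F x) (hG : ∀ x y, h y ≤ h x → G y ≤ G x)
    (hFG : ∀ t, μ {x | t < F x} = μ {x | t < G x}) : F =ᵐ[μ] G := by
  have key : ∀ q : ℚ, ({x | (q : ℝ) < F x} : Set X) =ᵐ[μ] {x | (q : ℝ) < G x} := by
    intro q
    have hA : MeasurableSet {x | (q : ℝ) < F x} := measurableSet_lt measurable_const hFm
    have hB : MeasurableSet {x | (q : ℝ) < G x} := measurableSet_lt measurable_const hGm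
    have hsub : ({x | (q : ℝ) < F x} ⊆ {x | (q : ℝ) < G x}) ∨
        ({x | (q : ℝ) < G x} ⊆ {x | (q : ℝ) < F x}) := by
      by_contra! hcon
      obtain ⟨h1, h2⟩ := hcon
      obtain ⟨x, hx, hx'⟩ := not_subset.1 h1
      obtain ⟨y, hy, hy'⟩ := not_subset.1 h2
      simp only [mem_ofPred_eq] at hx hx' hy hy'
      rcases le_total (h x) (h y) with hxy | hxy
      · exact hy' (hx.trans_le (hF _ _ hxy))
      · exact hx' (hy.trans_le (hG _ _ hxy))
    rcases hsub with hs | hs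
    · exact ae_eq_of_subset_of_measure_ge hs (hFG q).ge hA.nullMeasurableSet (measure_ne_top _ _)
    · exact (ae_eq_of_subset_of_measure_ge hs (hFG q).le hB.nullMeasurableSet
        (measure_ne_top _ _)).symm
  filter_upwards [ae_all_iff.2 key] with x hx
  have hx' : ∀ q : ℚ, (q : ℝ) < F x ↔ (q : ℝ) < G x := fun q => Eq.to_iff (hx q)
  refine le_antisymm (le_of_not_gt fun hlt => ?_) (le_of_not_gt fun hlt => ?_)
  · obtain ⟨q, h1, h2⟩ := exists_rat_btwn hlt
    exact absurd ((hx' q).1 h2) (not_lt.2 h1.le)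
  · obtain ⟨q, h1, h2⟩ := exists_rat_btwn hlt
    exact absurd ((hx' q).2 h2) (not_lt.2 h1.le)

variable {E : Type*} [NormedAddCommGroup E] [InnerProductSpace ℝ E]

lemma inner_mul_polarization_sub_nonneg (u : E) (F : C(sphere (0 : E) 1, ℝ))
    (x : sphere (0 : E) 1) : 0 ≤ ⟪u, (x : E)⟫ * (polarization u F x - F x) := by
  rcases polarization_pair u F x with ⟨s, e, -⟩ | ⟨s, e, -⟩ <;> rw [e]
  · exact mul_nonneg s (sub_nonneg.2 (le_max_left _ _))
  · exact mul_nonneg_of_nonpos_of_nonpos s (sub_nonpos.2 (min_le_left _ _))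

variable [MeasurableSpace E] {ν : Measure (sphere (0 : E) 1)}

lemma rieszForm_congr [SFinite ν] {k : ℝ → ℝ} {F F' G G' : sphere (0 : E) 1 → ℝ} (hF : F =ᵐ[ν] F')
    (hG : G =ᵐ[ν] G') : rieszForm ν k F G = rieszForm ν k F' G' := by
  refine integral_congr_ae ?_
  filter_upwards [Measure.quasiMeasurePreserving_fst.ae hF,
    Measure.quasiMeasurePreserving_snd.ae hG] with z h1 h2
  rw [h1, h2]

variable [FiniteDimensional ℝ E]

/-- The rearrangements of `f` obtained as limits of polarizations: continuous functions
equidistributed with `f`, with the same bound and a modulus of continuity at most that of `f`. -/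
def rearrangementClass (ν : Measure (sphere (0 : E) 1)) (f : C(sphere (0 : E) 1, ℝ)) :
    Set C(sphere (0 : E) 1, ℝ) :=
  {F | (∀ x, |F x| ≤ ‖f‖) ∧ ∀ δ ε : ℝ, (∀ x y, dist x y ≤ δ → |f x - f y| ≤ ε) →
        ∀ x y, dist x y ≤ δ → |F x - F y| ≤ ε} ∩
  {F | ∀ φ : C(ℝ, ℝ), ∫ x, φ (F x) ∂ν = ∫ x, φ (f x) ∂ν}

lemma self_mem_rearrangementClass (f : C(sphere (0 : E) 1, ℝ)) : f ∈ rearrangementClass ν f :=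
  ⟨⟨fun x => f.norm_coe_le_norm x, fun _ _ h => h⟩, fun _ => rfl⟩

variable [BorelSpace E] [IsFiniteMeasure ν]

lemma isCompact_rearrangementClass (f : C(sphere (0 : E) 1, ℝ)) :
    IsCompact (rearrangementClass ν f) := by
  refine (isCompact_setOf_modulus_le f _).inter_right ?_
  simp only [ofPred_forall]
  refine isClosed_iInter fun φ => isClosed_eq ?_ continuous_const
  have h := continuous_integral_mul_continuousMap ν (w := fun _ => 1) measurable_const
    (C := 1) (by simp)
  have h2 := h.comp (ContinuousMap.continuous_postcomp φ)
  simpa [Function.comp_def] using h2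

lemma integrable_continuousMap (F : C(sphere (0 : E) 1, ℝ)) : Integrable F ν :=
  integrable_of_abs_le F.continuous.measurable ‖F‖ F.norm_coe_le_norm

lemma polarization_mem_rearrangementClass {u : E}
    (hν : MeasurePreserving (sphereReflection u) ν ν) {f F : C(sphere (0 : E) 1, ℝ)}
    (hF : F ∈ rearrangementClass ν f) : polarization u F ∈ rearrangementClass ν f := by
  obtain ⟨⟨h1, h2⟩, h3⟩ := hF
  refine ⟨⟨fun x => ?_, fun δ ε h x y hxy => polarization_modulus u F (h2 δ ε h) x y hxy⟩,
    fun φ => ?_⟩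
  · rcases polarization_pair u F x with ⟨-, e, -⟩ | ⟨-, e, -⟩ <;> rw [e]
    · exact abs_max_le_max_abs_abs.trans (max_le (h1 _) (h1 _))
    · exact abs_min_le_max_abs_abs.trans (max_le (h1 _) (h1 _))
  · rw [← h3 φ]
    have e1 := two_mul_integral_eq_sphereReflection hν
      (integrable_continuousMap (ν := ν) (φ.comp (polarization u F)))
    have e2 := two_mul_integral_eq_sphereReflection hν
      (integrable_continuousMap (ν := ν) (φ.comp F))
    simp only [ContinuousMap.comp_apply, comp_polarization_add] at e1 e2
    linarith

lemma measure_lt_of_mem_rearrangementClass {f F : C(sphere (0 : E) 1, ℝ)}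
    (hF : F ∈ rearrangementClass ν f) (t : ℝ) : ν {x | t < F x} = ν {x | t < f x} := by
  have h : ν.map F = ν.map f := by
    refine ext_of_forall_integral_eq_of_IsFiniteMeasure fun φ => ?_
    rw [integral_map F.continuous.aemeasurable φ.continuous.aestronglyMeasurable,
      integral_map f.continuous.aemeasurable φ.continuous.aestronglyMeasurable]
    exact hF.2 φ.toContinuousMap
  have := congrArg (fun m => m (Ioi t)) h
  rwa [Measure.map_apply F.continuous.measurable measurableSet_Ioi,
    Measure.map_apply f.continuous.measurable measurableSet_Ioi] at this

/-- The change of `∫ F(x) (p·x)` under polarization, symmetrized. -/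
lemma two_mul_integral_polarization_sub {u p : E}
    (hν : MeasurePreserving (sphereReflection u) ν ν) (F : C(sphere (0 : E) 1, ℝ)) :
    2 * (∫ x, ⟪p, (x : E)⟫ * polarization u F x ∂ν - ∫ x, ⟪p, (x : E)⟫ * F x ∂ν) =
      ∫ x, 2 * (⟪p, u⟫ / ⟪u, u⟫) * (⟪u, (x : E)⟫ * (polarization u F x - F x)) ∂ν := by
  let w : C(sphere (0 : E) 1, ℝ) := ⟨fun x => ⟪p, (x : E)⟫, by fun_prop⟩
  have h1 := integral_sub (integrable_continuousMap (ν := ν) (w * polarization u F))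
    (integrable_continuousMap (ν := ν) (w * F))
  have h2 := two_mul_integral_eq_sphereReflection hν
    (integrable_continuousMap (ν := ν) (w * polarization u F - w * F))
  simp only [ContinuousMap.coe_mul, ContinuousMap.coe_sub, Pi.mul_apply, Pi.sub_apply,
    ContinuousMap.coe_mk, w] at h1 h2
  rw [← h1, h2]
  congr 1
  ext x
  have := polarization_add u F x
  rw [← eq_sub_iff_add_eq'] at this
  rw [this, inner_sphereReflection_right]
  ring

lemma integral_le_polarization {u p : E} (hu : 0 < ⟪u, p⟫)
    (hν : MeasurePreserving (sphereReflection u) ν ν) (F : C(sphere (0 : E) 1, ℝ)) :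
    ∫ x, ⟪p, (x : E)⟫ * F x ∂ν ≤ ∫ x, ⟪p, (x : E)⟫ * polarization u F x ∂ν := by
  have h := two_mul_integral_polarization_sub (p := p) hν F
  rw [integral_const_mul, real_inner_comm] at h
  have : 0 ≤ 2 * (⟪u, p⟫ / ⟪u, u⟫) * ∫ x, (⟪u, (x : E)⟫ * (polarization u F x - F x)) ∂ν :=
    mul_nonneg (mul_nonneg zero_le_two (div_nonneg hu.le real_inner_self_nonneg))
      (integral_nonneg (inner_mul_polarization_sub_nonneg u F))
  linarith

lemma isPolarized_of_integral_polarization_le [ν.IsOpenPosMeasure] {u p : E} (hu : 0 < ⟪u, p⟫)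
    (hν : MeasurePreserving (sphereReflection u) ν ν) (F : C(sphere (0 : E) 1, ℝ))
    (h : ∫ x, ⟪p, (x : E)⟫ * polarization u F x ∂ν ≤ ∫ x, ⟪p, (x : E)⟫ * F x ∂ν) :
    IsPolarized u F := by
  have h1 := two_mul_integral_polarization_sub (p := p) hν F
  have h2 := inner_mul_polarization_sub_nonneg u F
  have hu0 : u ≠ 0 := by rintro rfl; simp at hu
  have h3 : 0 < 2 * (⟪u, p⟫ / ⟪u, u⟫) := mul_pos two_pos (div_pos hu (real_inner_self_pos.2 hu0))
  rw [integral_const_mul, real_inner_comm] at h1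
  have h4 : ∫ x, (⟪u, (x : E)⟫ * (polarization u F x - F x)) ∂ν = 0 :=
    le_antisymm (by nlinarith) (integral_nonneg h2)
  have hc : Continuous fun x : sphere (0 : E) 1 => ⟪u, (x : E)⟫ * (polarization u F x - F x) := by
    fun_prop
  rw [integral_eq_zero_iff_of_nonneg h2 (integrable_continuousMap (ν := ν) ⟨_, hc⟩),
    hc.ae_eq_iff_eq ν continuous_zero] at h4
  intro x hx
  have h5 := congrFun h4 x
  rcases polarization_pair u F x with ⟨s, e, -⟩ | ⟨s, e, -⟩
  · rw [Pi.zero_apply, mul_eq_zero, or_iff_right hx.ne', sub_eq_zero] at h5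
    rw [← h5, e]
    exact le_max_right _ _
  · exact absurd hx (not_lt.2 s)

/-- A pair can be symmetrized about `p` without decreasing its Riesz form. -/
lemma exists_rearrangement_le_rieszForm [ν.IsOpenPosMeasure]
    (hν : ∀ u : E, MeasurePreserving (sphereReflection u) ν ν) {k : ℝ → ℝ}
    (hk : MonotoneOn k (Icc (-1) 1)) (p : E) (f g : C(sphere (0 : E) 1, ℝ)) :
    ∃ F ∈ rearrangementClass ν f, ∃ G ∈ rearrangementClass ν g,
      rieszForm ν k f g ≤ rieszForm ν k F G ∧
      ∀ u : E, 0 < ⟪u, p⟫ → IsPolarized u F ∧ IsPolarized u G := by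
  let K := (rearrangementClass ν f ×ˢ rearrangementClass ν g) ∩
    {q | rieszForm ν k f g ≤ rieszForm ν k q.1 q.2}
  have hK : IsCompact K :=
    ((isCompact_rearrangementClass f).prod (isCompact_rearrangementClass g)).inter_right
      (isClosed_le continuous_const (continuous_rieszForm ν hk))
  have hne : K.Nonempty :=
    ⟨(f, g), ⟨self_mem_rearrangementClass f, self_mem_rearrangementClass g⟩,
      le_refl (rieszForm ν k f g)⟩
  have hJ : Continuous fun F : C(sphere (0 : E) 1, ℝ) => ∫ x, ⟪p, (x : E)⟫ * F x ∂ν := by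
    refine continuous_integral_mul_continuousMap ν (C := ‖p‖)
      (Continuous.measurable (by fun_prop)) fun x => ?_
    simpa using abs_real_inner_le_norm p (x : E)
  obtain ⟨⟨F, G⟩, ⟨⟨hF, hG⟩, hI⟩, hmax⟩ := hK.exists_isMaxOn hne
    ((hJ.comp continuous_fst).add (hJ.comp continuous_snd)).continuousOn
  refine ⟨F, hF, G, hG, hI, fun u hu => ?_⟩
  have hm := hmax (show (polarization u F, polarization u G) ∈ K from
    ⟨⟨polarization_mem_rearrangementClass (hν u) hF,
      polarization_mem_rearrangementClass (hν u) hG⟩,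
      le_trans hI (rieszForm_le_polarization hk (hν u) F G)⟩)
  simp only [Pi.add_apply, Function.comp_apply, mem_ofPred_eq] at hm
  have h1 := integral_le_polarization hu (hν u) F
  have h2 := integral_le_polarization hu (hν u) G
  exact ⟨isPolarized_of_integral_polarization_le hu (hν u) F (by linarith),
    isPolarized_of_integral_polarization_le hu (hν u) G (by linarith)⟩

/-- The Riesz rearrangement inequality on the sphere, for continuous functions. -/
theorem rieszForm_le_symmetrization [ν.IsOpenPosMeasure]
    (hν : ∀ u : E, MeasurePreserving (sphereReflection u) ν ν) {k : ℝ → ℝ}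
    (hk : MonotoneOn k (Icc (-1) 1)) {p : E} (hp : p ≠ 0) {f g : C(sphere (0 : E) 1, ℝ)}
    {fs gs : sphere (0 : E) 1 → ℝ} (hfsm : Measurable fs) (hgsm : Measurable gs)
    (hfs : ∀ x y : sphere (0 : E) 1, ⟪(y : E), p⟫ ≤ ⟪(x : E), p⟫ → fs y ≤ fs x)
    (hgs : ∀ x y : sphere (0 : E) 1, ⟪(y : E), p⟫ ≤ ⟪(x : E), p⟫ → gs y ≤ gs x)
    (hffs : ∀ t, ν {x | t < f x} = ν {x | t < fs x})
    (hggs : ∀ t, ν {x | t < g x} = ν {x | t < gs x}) :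
    rieszForm ν k f g ≤ rieszForm ν k fs gs := by
  obtain ⟨F, hF, G, hG, hle, hpol⟩ := exists_rearrangement_le_rieszForm hν hk p f g
  refine hle.trans (rieszForm_congr ?_ ?_).le
  · refine ae_eq_of_monotone_of_measure_lt_eq (h := fun x : sphere (0 : E) 1 => ⟪(x : E), p⟫)
      F.continuous.measurable hfsm (fun x y hxy =>
        le_of_inner_le_of_isPolarized hp (fun u hu => (hpol u hu).1) hxy) hfs fun t => ?_
    rw [measure_lt_of_mem_rearrangementClass hF, hffs]
  · refine ae_eq_of_monotone_of_measure_lt_eq (h := fun x : sphere (0 : E) 1 => ⟪(x : E), p⟫)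
      G.continuous.measurable hgsm (fun x y hxy =>
        le_of_inner_le_of_isPolarized hp (fun u hu => (hpol u hu).2) hxy) hgs fun t => ?_
    rw [measure_lt_of_mem_rearrangementClass hG, hggs]

end RieszInequality

section Rigidity

open Filter Topology

variable {E : Type*} [NormedAddCommGroup E] [InnerProductSpace ℝ E]

lemma sphereReflection_smul {c : ℝ} (hc : c ≠ 0) (u : E) (x : sphere (0 : E) 1) :
    sphereReflection (c • u) x = sphereReflection u x := by
  ext
  simp only [sphereReflection, Submodule.span_singleton_smul_eq (IsUnit.mk0 c hc)]

/-- The directions whose reflection does not leave `F` invariant. -/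
def movingDirections (F : sphere (0 : E) 1 → ℝ) : Set E :=
  {u | u ≠ 0 ∧ ∃ x, F (sphereReflection u x) ≠ F x}

lemma isOpen_movingDirections (F : C(sphere (0 : E) 1, ℝ)) : IsOpen (movingDirections F) := by
  rw [isOpen_iff_eventually]
  rintro u ⟨hu, x, hx⟩
  have h := (F.continuous.continuousAt.comp (continuousAt_sphereReflection_left x hu))
  filter_upwards [isOpen_ne.mem_nhds hu, h.eventually_ne hx] with v h1 h2
  exact ⟨h1, x, h2⟩

/-- A function invariant under all reflections close to that along `u` is locally constant away
from the hyperplane orthogonal to `u`. -/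
lemma eventually_eq_of_sphereReflection_invariant {F : sphere (0 : E) 1 → ℝ} {u : E}
    (h : ∀ᶠ v in 𝓝 u, ∀ x, F (sphereReflection v x) = F x) {x : sphere (0 : E) 1}
    (hx : ⟪u, (x : E)⟫ ≠ 0) : ∀ᶠ y in 𝓝 x, F y = F x := by
  have hu : u ≠ 0 := by rintro rfl; simp at hx
  have huu : ⟪u, u⟫ ≠ 0 := by simpa using hu
  set c : ℝ := -(2 * (⟪u, (x : E)⟫ / ⟪u, u⟫)) with hc
  have hc0 : c ≠ 0 := by simp [hc, hx, hu]
  set z := sphereReflection u x with hz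
  have hlim : Tendsto (fun y : sphere (0 : E) 1 => c⁻¹ • ((z : E) - y)) (𝓝 x) (𝓝 u) := by
    have hcont : Continuous (fun y : sphere (0 : E) 1 => c⁻¹ • ((z : E) - y)) := by fun_prop
    have hval : c⁻¹ • ((z : E) - x) = u := by
      rw [hz, coe_sphereReflection, sub_sub_cancel_left, ← neg_smul, ← hc, smul_smul,
        inv_mul_cancel₀ hc0, one_smul]
    have := hcont.tendsto x
    rwa [hval] at this
  have h0 : F z = F x := h.self_of_nhds x
  filter_upwards [hlim.eventually h] with y hy
  have := hy z
  rw [sphereReflection_smul (inv_ne_zero hc0), sphereReflection_sub] at this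
  rw [this, h0]

lemma eq_of_sphereReflection_invariant (F : C(sphere (0 : E) 1, ℝ)) {u : E} (hu : u ≠ 0)
    (h : ∀ᶠ v in 𝓝 u, ∀ x, F (sphereReflection v x) = F x) (x y : sphere (0 : E) 1) :
    F x = F y := by
  let C : Set E := {w | 0 < ⟪u, w⟫}
  have hC : Convex ℝ C := convex_halfSpace_gt (innerₗ E u).isLinear 0
  have hC0 : ∀ w : C, (w : E) ∈ ({0}ᶜ : Set E) := by
    rintro ⟨w, hw⟩ rfl
    simp [C] at hw
  have : PreconnectedSpace C := Subtype.preconnectedSpace hC.isPreconnected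
  let N : ({0}ᶜ : Set E) → sphere (0 : E) 1 := fun w => (homeomorphUnitSphereProd E w).1
  have hN : Continuous N := by fun_prop
  have hNval : ∀ w, (N w : E) = ‖(w : E)‖⁻¹ • (w : E) := fun w =>
    homeomorphUnitSphereProd_apply_fst_coe E w
  have hNs : ∀ (v : sphere (0 : E) 1) (hv : (v : E) ∈ ({0}ᶜ : Set E)), N ⟨v, hv⟩ = v := by
    intro v hv
    ext
    simp [hNval]
  let q : C → sphere (0 : E) 1 := fun w => N ⟨w, hC0 w⟩
  have hq : Continuous q := by fun_prop
  have hqpos : ∀ w, 0 < ⟪u, (q w : E)⟫ := by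
    intro w
    have hw0 : 0 < ‖(w : E)‖⁻¹ := inv_pos.2 (norm_pos_iff.2 (hC0 w))
    simp only [q, hNval, inner_smul_right]
    exact mul_pos hw0 w.2
  have hloc : IsLocallyConstant (F ∘ q) := by
    rw [IsLocallyConstant.iff_eventually_eq]
    intro w
    exact (hq.tendsto w).eventually
      (eventually_eq_of_sphereReflection_invariant h (hqpos w).ne')
  let w₀ : C := ⟨u, real_inner_self_pos.2 hu⟩
  have hpos : ∀ v : sphere (0 : E) 1, 0 < ⟪u, (v : E)⟫ → F v = F (q w₀) := by
    intro v hv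
    have := hloc.apply_eq_of_preconnectedSpace ⟨v, hv⟩ w₀
    simpa only [Function.comp_apply, q, hNs] using this
  have hall : ∀ v : sphere (0 : E) 1, F v = F (q w₀) := by
    intro v
    rcases lt_trichotomy ⟪u, (v : E)⟫ 0 with hv | hv | hv
    · rw [← h.self_of_nhds v]
      exact hpos _ (by rw [inner_sphereReflection_self]; linarith)
    · have hne : ∀ ε : ℝ, (v : E) + ε • u ∈ ({0}ᶜ : Set E) := by
        intro ε h0
        have : ⟪(v : E) + ε • u, (v : E)⟫ = 0 := by
          rw [mem_singleton_iff.1 h0, inner_zero_left]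
        rw [inner_add_left, inner_smul_left, hv] at this
        simp at this
      let γ : ℝ → sphere (0 : E) 1 := fun ε => N ⟨(v : E) + ε • u, hne ε⟩
      have hγ : Continuous γ := by fun_prop
      have hγ0 : γ 0 = v := by
        ext
        simp [γ, hNval]
      have hlim : Tendsto (fun ε => F (γ ε)) (𝓝[>] 0) (𝓝 (F v)) := by
        have := (F.continuous.comp hγ).tendsto 0
        simp only [Function.comp_apply, hγ0] at this
        exact this.mono_left nhdsWithin_le_nhds
      refine tendsto_nhds_unique_of_eventuallyEq hlim tendsto_const_nhds ?_
      filter_upwards [self_mem_nhdsWithin] with ε hε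
      refine hpos _ ?_
      simp only [γ, hNval, inner_smul_right, inner_add_right, hv, zero_add]
      exact mul_pos (inv_pos.2 (norm_pos_iff.2 (hne ε))) (mul_pos hε (real_inner_self_pos.2 hu))
    · exact hpos v hv
  rw [hall x, hall y]

lemma dense_movingDirections {F : C(sphere (0 : E) 1, ℝ)} (hF : ∃ x y, F x ≠ F y) :
    Dense (movingDirections F) := by
  obtain ⟨x, y, hxy⟩ := hF
  have : Nontrivial E := ⟨x, 0, ne_zero_of_mem_unit_sphere x⟩
  rw [dense_iff_inter_open]
  intro U hU hne
  obtain ⟨u, hu, hu0⟩ := (dense_compl_singleton (0 : E)).inter_open_nonempty U hU hne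
  by_contra hcon
  refine hxy (eq_of_sphereReflection_invariant F hu0 ?_ x y)
  filter_upwards [hU.mem_nhds hu, isOpen_ne.mem_nhds hu0] with v hv hv0
  by_contra! hv1
  exact hcon ⟨v, hv, hv0, hv1⟩

lemma isPolarized_of_frequently {F : C(sphere (0 : E) 1, ℝ)} {u : E} (hu : u ≠ 0)
    (h : ∃ᶠ v in 𝓝 u, IsPolarized v F) : IsPolarized u F := by
  intro x hx
  by_contra! hlt
  have h1 : ∀ᶠ v in 𝓝 u, F x < F (sphereReflection v x) :=
    (F.continuous.continuousAt.comp (continuousAt_sphereReflection_left x hu)).eventually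
      (lt_mem_nhds hlt)
  have h2 : ∀ᶠ v in 𝓝 u, 0 < ⟪v, (x : E)⟫ :=
    (Continuous.tendsto (by fun_prop : Continuous fun v : E => ⟪v, (x : E)⟫) u).eventually
      (lt_mem_nhds hx)
  obtain ⟨v, hv, hv1, hv2⟩ := (h.and_eventually (h1.and h2)).exists
  exact absurd (hv x hv2) (not_le.2 hv1)

lemma isPolarized_neg_of_forall_le {F : sphere (0 : E) 1 → ℝ} {u : E}
    (h : ∀ x : sphere (0 : E) 1, 0 < ⟪u, (x : E)⟫ → F x ≤ F (sphereReflection u x)) :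
    IsPolarized (-u) F := by
  intro x hx
  have := h (sphereReflection u x) (by
    rw [inner_sphereReflection_self]; simpa using hx)
  rwa [sphereReflection_sphereReflection, ← sphereReflection_neg] at this

lemma exists_inner_pos_of_mem_movingDirections {F : sphere (0 : E) 1 → ℝ} {u : E}
    (hu : u ∈ movingDirections F) :
    ∃ x : sphere (0 : E) 1, 0 < ⟪u, (x : E)⟫ ∧ F x - F (sphereReflection u x) ≠ 0 := by
  obtain ⟨-, x, hx⟩ := hu
  rcases lt_trichotomy ⟪u, (x : E)⟫ 0 with h | h | h
  · refine ⟨sphereReflection u x, by rw [inner_sphereReflection_self]; linarith, ?_⟩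
    rw [sphereReflection_sphereReflection]
    exact sub_ne_zero.2 hx
  · rw [sphereReflection_eq_self h] at hx
    exact absurd rfl hx
  · exact ⟨x, h, sub_ne_zero.2 hx.symm⟩

lemma isPolarized_or_neg_of_mul_sub_nonneg {F G : sphere (0 : E) 1 → ℝ} {u : E}
    (hF : u ∈ movingDirections F) (hG : u ∈ movingDirections G)
    (h : ∀ x y : sphere (0 : E) 1, 0 < ⟪u, (x : E)⟫ → 0 < ⟪u, (y : E)⟫ →
      0 ≤ (F x - F (sphereReflection u x)) * (G y - G (sphereReflection u y))) :
    (IsPolarized u F ∧ IsPolarized u G) ∨ (IsPolarized (-u) F ∧ IsPolarized (-u) G) := by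
  obtain ⟨x₀, hx₀, hx⟩ := exists_inner_pos_of_mem_movingDirections hF
  obtain ⟨y₀, hy₀, hy⟩ := exists_inner_pos_of_mem_movingDirections hG
  have hpos := lt_of_le_of_ne (h x₀ y₀ hx₀ hy₀) (mul_ne_zero hx hy).symm
  rcases pos_and_pos_or_neg_and_neg_of_mul_pos hpos with ⟨h1, h2⟩ | ⟨h1, h2⟩
  · left
    exact ⟨fun x hx => sub_nonneg.1 (nonneg_of_mul_nonneg_left (h x y₀ hx hy₀) h2),
      fun y hy => sub_nonneg.1 (nonneg_of_mul_nonneg_right (h x₀ y hx₀ hy) h1)⟩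
  · right
    refine ⟨isPolarized_neg_of_forall_le fun x hx => ?_,
      isPolarized_neg_of_forall_le fun y hy => ?_⟩
    · have := h x y₀ hx hy₀
      by_contra! hc
      nlinarith
    · have := h x₀ y hx₀ hy
      by_contra! hc
      nlinarith

lemma isPolarized_or_neg {F G : C(sphere (0 : E) 1, ℝ)} (hF : ∃ x y, F x ≠ F y)
    (hG : ∃ x y, G x ≠ G y)
    (h : ∀ u : E, ∀ x y : sphere (0 : E) 1, 0 < ⟪u, (x : E)⟫ → 0 < ⟪u, (y : E)⟫ →
      0 ≤ (F x - F (sphereReflection u x)) * (G y - G (sphereReflection u y)))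
    {u : E} (hu : u ≠ 0) :
    (IsPolarized u F ∧ IsPolarized u G) ∨ (IsPolarized (-u) F ∧ IsPolarized (-u) G) := by
  have hd : Dense (movingDirections F ∩ movingDirections G) :=
    (dense_movingDirections hF).inter_of_isOpen_left (dense_movingDirections hG)
      (isOpen_movingDirections F)
  have hfr : ∃ᶠ v in 𝓝 u, (IsPolarized v F ∧ IsPolarized v G) ∨
      (IsPolarized (-v) F ∧ IsPolarized (-v) G) :=
    (mem_closure_iff_frequently.1 (hd u)).mono fun v hv =>
      isPolarized_or_neg_of_mul_sub_nonneg hv.1 hv.2 (h v)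
  rcases frequently_or_distrib.1 hfr with hfr | hfr
  · exact Or.inl ⟨isPolarized_of_frequently hu (hfr.mono fun _ => And.left),
      isPolarized_of_frequently hu (hfr.mono fun _ => And.right)⟩
  · have hfr' : ∃ᶠ v in 𝓝 (-u), IsPolarized v F ∧ IsPolarized v G :=
      (continuous_neg.tendsto u).frequently hfr
    exact Or.inr ⟨isPolarized_of_frequently (neg_ne_zero.2 hu) (hfr'.mono fun _ => And.left),
      isPolarized_of_frequently (neg_ne_zero.2 hu) (hfr'.mono fun _ => And.right)⟩

lemma IsPolarized.mul_sub_nonneg {u : E} {F : sphere (0 : E) 1 → ℝ} (h : IsPolarized u F)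
    (x : sphere (0 : E) 1) : 0 ≤ ⟪u, (x : E)⟫ * (F x - F (sphereReflection u x)) := by
  rcases le_total 0 ⟪u, (x : E)⟫ with hx | hx
  · rcases hx.eq_or_lt with hx | hx
    · simp [← hx]
    · exact mul_nonneg hx.le (sub_nonneg.2 (h x hx))
  · rcases hx.eq_or_lt with hx | hx
    · simp [hx]
    · have := h (sphereReflection u x) (by rw [inner_sphereReflection_self]; linarith)
      rw [sphereReflection_sphereReflection] at this
      exact mul_nonneg_of_nonpos_of_nonpos hx.le (sub_nonpos.2 this)

lemma neg_mem_movingDirections {F : sphere (0 : E) 1 → ℝ} {u : E}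
    (hu : u ∈ movingDirections F) : -u ∈ movingDirections F := by
  obtain ⟨h0, x, hx⟩ := hu
  exact ⟨neg_ne_zero.2 h0, x, by rwa [sphereReflection_neg]⟩

variable [FiniteDimensional ℝ E] [MeasurableSpace E] [BorelSpace E]
  {ν : Measure (sphere (0 : E) 1)} [IsFiniteMeasure ν]

/-- The first moment of `F` over the sphere. -/
def firstMoment (ν : Measure (sphere (0 : E) 1)) (F : sphere (0 : E) 1 → ℝ) : E :=
  ∫ x, F x • (x : E) ∂ν

lemma two_mul_inner_firstMoment {u : E} (hν : MeasurePreserving (sphereReflection u) ν ν)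
    (F : C(sphere (0 : E) 1, ℝ)) :
    2 * ⟪u, firstMoment ν F⟫ =
      ∫ x, ⟪u, (x : E)⟫ * (F x - F (sphereReflection u x)) ∂ν := by
  have hi : Integrable (fun x => F x • (x : E)) ν := by
    refine Integrable.of_bound (Continuous.aestronglyMeasurable (by fun_prop)) ‖F‖
      (.of_forall fun x => ?_)
    rw [norm_smul, norm_eq_of_mem_sphere, mul_one]
    exact F.norm_coe_le_norm x
  let w : C(sphere (0 : E) 1, ℝ) := ⟨fun x => ⟪u, (x : E)⟫, by fun_prop⟩
  have h2 := two_mul_integral_eq_sphereReflection hν (integrable_continuousMap (ν := ν) (w * F))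
  rw [firstMoment, ← integral_inner hi]
  simp only [ContinuousMap.coe_mul, Pi.mul_apply, ContinuousMap.coe_mk, w,
    inner_sphereReflection_self] at h2
  simp only [inner_smul_right, mul_comm (F _), h2]
  congr 1
  ext x
  ring

lemma IsPolarized.inner_firstMoment_nonneg {u : E}
    (hν : MeasurePreserving (sphereReflection u) ν ν) {F : C(sphere (0 : E) 1, ℝ)}
    (h : IsPolarized u F) : 0 ≤ ⟪u, firstMoment ν F⟫ := by
  have h1 := two_mul_inner_firstMoment hν F
  have h2 := integral_nonneg (μ := ν)
    (f := fun x : sphere (0 : E) 1 => ⟪u, (x : E)⟫ * (F x - F (sphereReflection u x)))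
    (fun x => h.mul_sub_nonneg x)
  linarith

lemma IsPolarized.inner_firstMoment_ne_zero [ν.IsOpenPosMeasure] {u : E}
    (hν : MeasurePreserving (sphereReflection u) ν ν) {F : C(sphere (0 : E) 1, ℝ)}
    (h : IsPolarized u F) (hu : u ∈ movingDirections F) : ⟪u, firstMoment ν F⟫ ≠ 0 := by
  intro h0
  have h1 := two_mul_inner_firstMoment hν F
  rw [h0, mul_zero] at h1
  have hc : Continuous fun x : sphere (0 : E) 1 =>
      ⟪u, (x : E)⟫ * (F x - F (sphereReflection u x)) := by fun_prop
  have h4 := h1.symm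
  rw [integral_eq_zero_iff_of_nonneg (fun x => h.mul_sub_nonneg x)
    (integrable_continuousMap (ν := ν) ⟨_, hc⟩), hc.ae_eq_iff_eq ν continuous_zero] at h4
  obtain ⟨x, hx, hx'⟩ := exists_inner_pos_of_mem_movingDirections hu
  exact mul_ne_zero hx.ne' hx' (congrFun h4 x)

/-- Two nonconstant functions whose increments across every hyperplane have the same sign are
symmetric decreasing about a common point. -/
theorem exists_common_pole [ν.IsOpenPosMeasure]
    (hν : ∀ u : E, MeasurePreserving (sphereReflection u) ν ν)
    {F G : C(sphere (0 : E) 1, ℝ)} (hF : ∃ x y, F x ≠ F y) (hG : ∃ x y, G x ≠ G y)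
    (h : ∀ u : E, ∀ x y : sphere (0 : E) 1, 0 < ⟪u, (x : E)⟫ → 0 < ⟪u, (y : E)⟫ →
      0 ≤ (F x - F (sphereReflection u x)) * (G y - G (sphereReflection u y))) :
    ∃ p ∈ sphere (0 : E) 1, ∀ x y : sphere (0 : E) 1, ⟪(y : E), p⟫ ≤ ⟪(x : E), p⟫ →
      F y ≤ F x ∧ G y ≤ G x := by
  set v := firstMoment ν F with hv
  have hv0 : v ≠ 0 := by
    intro h0
    have ⟨x, _⟩ := hF
    obtain ⟨u, hu⟩ := (dense_movingDirections hF).nonempty_iff.2 ⟨(x : E)⟩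
    rcases isPolarized_or_neg hF hG h hu.1 with ⟨hP, -⟩ | ⟨hP, -⟩
    · exact hP.inner_firstMoment_ne_zero (hν u) hu (by rw [← hv, h0, inner_zero_right])
    · exact hP.inner_firstMoment_ne_zero (hν _) (neg_mem_movingDirections hu)
        (by rw [← hv, h0, inner_zero_right])
  have hvn : 0 < ‖v‖⁻¹ := inv_pos.2 (norm_pos_iff.2 hv0)
  have hP : ∀ u : E, 0 < ⟪u, ‖v‖⁻¹ • v⟫ → IsPolarized u F ∧ IsPolarized u G := by
    intro u hu
    rw [inner_smul_right] at hu
    have huv : 0 < ⟪u, v⟫ := pos_of_mul_pos_right hu hvn.le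
    have hu0 : u ≠ 0 := by rintro rfl; simp at huv
    refine (isPolarized_or_neg hF hG h hu0).resolve_right fun hneg => ?_
    have := hneg.1.inner_firstMoment_nonneg (hν (-u))
    rw [inner_neg_left, ← hv] at this
    linarith
  have hp0 : ‖v‖⁻¹ • v ≠ 0 := smul_ne_zero hvn.ne' hv0
  refine ⟨‖v‖⁻¹ • v, by simp [norm_smul, hv0], fun x y hxy => ⟨?_, ?_⟩⟩
  · exact le_of_inner_le_of_isPolarized hp0 (fun u hu => (hP u hu).1) hxy
  · exact le_of_inner_le_of_isPolarized hp0 (fun u hu => (hP u hu).2) hxy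

end Rigidity

section SphereHausdorff

open Filter Topology Module

lemma setIntegral_sphere_hausdorffMeasure {E : Type*} [NormedAddCommGroup E]
    [MeasurableSpace E] [BorelSpace E] (n : ℕ) (h : E → ℝ) :
    ∫ x in sphere (0 : E) 1, h x ∂μH[(n : ℝ)] =
      ∫ x : sphere (0 : E) 1, h x ∂μH[(n : ℝ)] := by
  have hm := isometry_subtype_coe (s := sphere (0 : E) 1) |>.map_hausdorffMeasure (d := (n : ℝ))
    (.inl n.cast_nonneg)
  rw [Subtype.range_coe] at hm
  rw [← hm, (MeasurableEmbedding.subtype_coe isClosed_sphere.measurableSet).integral_map]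

lemma hausdorffMeasure_setOf_mem_sphere_and {E : Type*} [NormedAddCommGroup E]
    [MeasurableSpace E] [BorelSpace E] (n : ℕ) (P : E → Prop) :
    μH[(n : ℝ)] {x : sphere (0 : E) 1 | P x} =
      μH[(n : ℝ)] {x ∈ sphere (0 : E) 1 | P x} := by
  have := isometry_subtype_coe (s := sphere (0 : E) 1) |>.hausdorffMeasure_preimage
    (d := (n : ℝ)) (.inl n.cast_nonneg) {x | P x}
  rw [Subtype.range_coe, inter_comm] at this
  exact this

variable {E : Type*} [NormedAddCommGroup E] [InnerProductSpace ℝ E]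

lemma exists_lipschitzOnWith_stereographic (v x : sphere (0 : E) 1) (hx : x ≠ v) :
    ∃ K, ∃ s ∈ 𝓝 x, LipschitzOnWith K (stereographic (norm_eq_of_mem_sphere v)) s := by
  have hU : {y : E | innerSL ℝ (v : E) y ≠ 1} ∈ 𝓝 (x : E) := by
    refine (isOpen_ne_fun (by fun_prop) continuous_const).mem_nhds ?_
    rw [mem_ofPred_eq, innerSL_apply_apply, Ne,
      inner_eq_one_iff_of_norm_eq_one (norm_eq_of_mem_sphere v) (norm_eq_of_mem_sphere x)]
    exact fun h => hx (Subtype.ext h.symm)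
  obtain ⟨K, s, hs, hK⟩ :=
    ((contDiffOn_stereoToFun (n := 1)).contDiffAt hU).exists_lipschitzOnWith
  refine ⟨K, Subtype.val ⁻¹' s, continuous_subtype_val.continuousAt hs, fun y hy z hz => ?_⟩
  exact hK hy hz

lemma exists_lipschitzOnWith_stereographic_symm (v : sphere (0 : E) 1) (w : (ℝ ∙ (v : E))ᗮ) :
    ∃ K, ∃ s ∈ 𝓝 w,
      LipschitzOnWith K (stereographic (norm_eq_of_mem_sphere v)).symm s := by
  have h : ContDiff ℝ 1 (stereoInvFunAux (v : E) ∘ ((↑) : (ℝ ∙ (v : E))ᗮ → E)) :=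
    contDiff_stereoInvFunAux.comp (ℝ ∙ (v : E))ᗮ.subtypeL.contDiff
  obtain ⟨K, s, hs, hK⟩ := h.contDiffAt.exists_lipschitzOnWith
  exact ⟨K, s, hs, fun y hy z hz => hK hy hz⟩

lemma finrank_orthogonal_span_sphere {n : ℕ} [Fact (finrank ℝ E = n + 1)] (v : sphere (0 : E) 1) :
    finrank ℝ (ℝ ∙ (v : E))ᗮ = n :=
  Submodule.finrank_orthogonal_span_singleton (ne_zero_of_mem_unit_sphere v)

variable [MeasurableSpace E] [BorelSpace E] {n : ℕ} [Fact (finrank ℝ E = n + 1)]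

/-- The `n`-dimensional Hausdorff measure of the unit sphere of dimension `n` is finite. -/
lemma isFiniteMeasure_hausdorffMeasure_sphere :
    IsFiniteMeasure (μH[(n : ℝ)] : Measure (sphere (0 : E) 1)) := by
  have : FiniteDimensional ℝ E := .of_fact_finrank_eq_succ n
  have : IsLocallyFiniteMeasure (μH[(n : ℝ)] : Measure (sphere (0 : E) 1)) := by
    refine ⟨fun x => ?_⟩
    set e := stereographic (norm_eq_of_mem_sphere (-x)) with he
    have hxs : x ∈ e.source := by
      rw [he, stereographic_source]
      exact ne_neg_of_mem_unit_sphere ℝ x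
    obtain ⟨K, s, hs, hK⟩ := exists_lipschitzOnWith_stereographic_symm (-x) (e x)
    obtain ⟨r, hr, hrs⟩ := nhds_basis_closedBall.mem_iff.1 hs
    refine ⟨e.symm '' closedBall (e x) r, ?_, ?_⟩
    · have := e.symm.image_mem_nhds (e.map_source hxs) (closedBall_mem_nhds (e x) hr)
      rwa [e.left_inv hxs] at this
    · refine ((hK.mono hrs).hausdorffMeasure_image_le n.cast_nonneg).trans_lt ?_
      refine ENNReal.mul_lt_top (ENNReal.rpow_lt_top_of_nonneg n.cast_nonneg (by simp)) ?_
      rw [← finrank_orthogonal_span_sphere (n := n) (-x)]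
      exact (isCompact_closedBall _ _).measure_lt_top
  have : CompactSpace (sphere (0 : E) 1) := by infer_instance
  infer_instance

/-- The `n`-dimensional Hausdorff measure of the unit sphere of dimension `n` charges every
nonempty open set. -/
lemma isOpenPosMeasure_hausdorffMeasure_sphere :
    (μH[(n : ℝ)] : Measure (sphere (0 : E) 1)).IsOpenPosMeasure := by
  have : FiniteDimensional ℝ E := .of_fact_finrank_eq_succ n
  refine ⟨fun U hU ⟨x, hxU⟩ h0 => ?_⟩
  have hx : x ≠ -x := ne_neg_of_mem_unit_sphere ℝ x
  set e := stereographic (norm_eq_of_mem_sphere (-x)) with he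
  have hxs : x ∈ e.source := by
    rw [he, stereographic_source]
    exact hx
  obtain ⟨K, s, hs, hK⟩ := exists_lipschitzOnWith_stereographic (-x) x hx
  have hnhds : e '' (s ∩ U) ∈ 𝓝 (e x) :=
    e.image_mem_nhds hxs (inter_mem hs (hU.mem_nhds hxU))
  have hpos : 0 < μH[(n : ℝ)] (e '' (s ∩ U)) := by
    rw [← finrank_orthogonal_span_sphere (n := n) (-x)]
    exact Measure.measure_pos_of_mem_nhds _ hnhds
  refine hpos.ne' (le_antisymm ?_ zero_le)
  calc μH[(n : ℝ)] (e '' (s ∩ U)) ≤ K ^ (n : ℝ) * μH[(n : ℝ)] (s ∩ U) :=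
        (hK.mono inter_subset_left).hausdorffMeasure_image_le n.cast_nonneg
    _ = 0 := by rw [measure_mono_null inter_subset_right h0, mul_zero]

end SphereHausdorff

section Symmetrization

variable {E : Type*} [NormedAddCommGroup E] [InnerProductSpace ℝ E]

/-- A function whose values are ordered like the heights over `p` is a monotone function of the
height over `p`. -/
lemma exists_monotoneOn_comp_inner {F : C(sphere (0 : E) 1, ℝ)} {p : E} (hp : p ∈ sphere (0 : E) 1)
    [CompactSpace (sphere (0 : E) 1)]
    (h : ∀ x y : sphere (0 : E) 1, ⟪(y : E), p⟫ ≤ ⟪(x : E), p⟫ → F y ≤ F x) :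
    ∃ φ : ℝ → ℝ, MonotoneOn φ (Icc (-1 : ℝ) 1) ∧
      ∀ x : sphere (0 : E) 1, F x = φ ⟪(x : E), p⟫ := by
  let S : ℝ → Set ℝ := fun t => F '' {x | ⟪(x : E), p⟫ ≤ t}
  have hb : ∀ t, BddAbove (S t) := by
    intro t
    refine ⟨‖F‖, ?_⟩
    rintro _ ⟨x, -, rfl⟩
    exact (le_abs_self _).trans (F.norm_coe_le_norm x)
  refine ⟨fun t => sSup (S t), fun s hs t _ hst => ?_, fun x => ?_⟩
  · refine csSup_le_csSup (hb t) ?_ (image_mono fun x hx => le_trans hx hst)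
    refine Set.Nonempty.image F ⟨-⟨p, hp⟩, ?_⟩
    have : ‖p‖ = 1 := by simpa using hp
    simpa [this] using hs.1
  · refine (IsGreatest.csSup_eq ⟨mem_image_of_mem F (le_refl ⟪(x : E), p⟫), ?_⟩).symm
    rintro _ ⟨y, hy, rfl⟩
    exact h x y hy

variable [FiniteDimensional ℝ E] [MeasurableSpace E] [BorelSpace E]

lemma setIntegral_setIntegral_sphere_eq_rieszForm {n : ℕ}
    [IsFiniteMeasure (μH[(n : ℝ)] : Measure (sphere (0 : E) 1))] {k : ℝ → ℝ}
    (hk : MonotoneOn k (Icc (-1) 1)) {f g : E → ℝ}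
    (hf : Measurable fun x : sphere (0 : E) 1 => f x)
    (hg : Measurable fun x : sphere (0 : E) 1 => g x)
    (hfb : ∃ C, ∀ x : sphere (0 : E) 1, |f x| ≤ C)
    (hgb : ∃ C, ∀ x : sphere (0 : E) 1, |g x| ≤ C) :
    ∫ x in sphere (0 : E) 1, (∫ y in sphere (0 : E) 1, k ⟪x, y⟫ * f x * g y ∂μH[(n : ℝ)])
        ∂μH[(n : ℝ)] =
      rieszForm μH[(n : ℝ)] k (fun x : sphere (0 : E) 1 => f x) (fun x => g x) := by
  obtain ⟨A, hA⟩ := hfb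
  obtain ⟨B, hB⟩ := hgb
  obtain ⟨C, hC⟩ := hk.exists_abs_le_Icc (by norm_num)
  simp only [setIntegral_sphere_hausdorffMeasure]
  rw [rieszForm, integral_prod]
  · simp only [mul_assoc]
  · refine integrable_of_abs_le ((measurable_kernel hk).mul
      ((hf.comp measurable_fst).mul (hg.comp measurable_snd))) (C * (A * B)) fun z => ?_
    have h1 := hC _ (inner_mem_Icc_of_mem_sphere z.1 z.2)
    rw [abs_mul, abs_mul]
    have := (abs_nonneg _).trans h1
    have := (abs_nonneg _).trans (hA z.1)
    gcongr
    exacts [hA _, hB _]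

/-- If `f` and `g` attain equality in the Riesz rearrangement inequality on the sphere, then they
are symmetric decreasing about a common point. -/
theorem exists_common_pole_of_rieszForm_symmetrization_le {ν : Measure (sphere (0 : E) 1)}
    [IsFiniteMeasure ν] [ν.IsOpenPosMeasure]
    (hν : ∀ u : E, MeasurePreserving (sphereReflection u) ν ν) {k : ℝ → ℝ}
    (hk : StrictMonoOn k (Icc (-1) 1)) {p : E} (hp : p ≠ 0) {f g : C(sphere (0 : E) 1, ℝ)}
    (hf : ∃ x y, f x ≠ f y) (hg : ∃ x y, g x ≠ g y)
    {fs gs : sphere (0 : E) 1 → ℝ} (hfsm : Measurable fs) (hgsm : Measurable gs)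
    (hfs : ∀ x y : sphere (0 : E) 1, ⟪(y : E), p⟫ ≤ ⟪(x : E), p⟫ → fs y ≤ fs x)
    (hgs : ∀ x y : sphere (0 : E) 1, ⟪(y : E), p⟫ ≤ ⟪(x : E), p⟫ → gs y ≤ gs x)
    (hffs : ∀ t, ν {x | t < f x} = ν {x | t < fs x})
    (hggs : ∀ t, ν {x | t < g x} = ν {x | t < gs x})
    (hle : rieszForm ν k fs gs ≤ rieszForm ν k f g) :
    ∃ q ∈ sphere (0 : E) 1, ∀ x y : sphere (0 : E) 1, ⟪(y : E), q⟫ ≤ ⟪(x : E), q⟫ →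
      f y ≤ f x ∧ g y ≤ g x := by
  refine exists_common_pole hν hf hg fun u x y hx hy => ?_
  have hmem : ∀ F : C(sphere (0 : E) 1, ℝ), ∀ t,
      ν {x | t < polarization u F x} = ν {x | t < F x} := fun F =>
    measure_lt_of_mem_rearrangementClass
      (polarization_mem_rearrangementClass (hν u) (self_mem_rearrangementClass F))
  refine mul_sub_nonneg_of_rieszForm_polarization_le hk (hν u) (le_trans ?_ hle) hx hy
  exact rieszForm_le_symmetrization hν hk.monotoneOn hp hfsm hgsm hfs hgs
    (fun t => (hmem f t).trans (hffs t)) (fun t => (hmem g t).trans (hggs t))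

end Symmetrization

/-- Equality case in the spherical Riesz rearrangement inequality (Baernstein–Taylor):
if `k` is bounded and strictly increasing on `[-1,1]`, `f, g ∈ C(Sⁿ)` are non-constant, and
`∫∫ k(x·y) f(x) g(y) = ∫∫ k(x·y) f*(x) g*(y)` where `f*, g*` are the symmetric decreasing
rearrangements (with respect to the north pole `N`), then `f` and `g` are radial symmetric
and decreasing with respect to the same point. -/
theorem stmt_10 (n : ℕ) (k : ℝ → ℝ)
    (hk : StrictMonoOn k (Icc (-1 : ℝ) 1))
    (hkb : ∃ C : ℝ, ∀ t ∈ Icc (-1 : ℝ) 1, |k t| ≤ C)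
    (f g fs gs : EuclideanSpace ℝ (Fin (n + 1)) → ℝ)
    (hf : ContinuousOn f (sphere (0 : EuclideanSpace ℝ (Fin (n + 1))) 1))
    (hg : ContinuousOn g (sphere (0 : EuclideanSpace ℝ (Fin (n + 1))) 1))
    (hfc : ¬ ∃ c : ℝ, ∀ x ∈ sphere (0 : EuclideanSpace ℝ (Fin (n + 1))) 1, f x = c)
    (hgc : ¬ ∃ c : ℝ, ∀ x ∈ sphere (0 : EuclideanSpace ℝ (Fin (n + 1))) 1, g x = c)
    -- `fs` is the symmetrization of `f`: radial symmetric and decreasing with respect to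
    -- the north pole, and equidistributed with `f`.
    (hfs : (∃ φ : ℝ → ℝ, MonotoneOn φ (Icc (-1 : ℝ) 1) ∧
        ∀ x ∈ sphere (0 : EuclideanSpace ℝ (Fin (n + 1))) 1,
          fs x = φ ⟪x, EuclideanSpace.single (Fin.last n) (1 : ℝ)⟫) ∧
      ∀ t : ℝ, μH[(n : ℝ)] {x ∈ sphere (0 : EuclideanSpace ℝ (Fin (n + 1))) 1 | t < f x} =
        μH[(n : ℝ)] {x ∈ sphere (0 : EuclideanSpace ℝ (Fin (n + 1))) 1 | t < fs x})
    (hgs : (∃ ψ : ℝ → ℝ, MonotoneOn ψ (Icc (-1 : ℝ) 1) ∧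
        ∀ x ∈ sphere (0 : EuclideanSpace ℝ (Fin (n + 1))) 1,
          gs x = ψ ⟪x, EuclideanSpace.single (Fin.last n) (1 : ℝ)⟫) ∧
      ∀ t : ℝ, μH[(n : ℝ)] {x ∈ sphere (0 : EuclideanSpace ℝ (Fin (n + 1))) 1 | t < g x} =
        μH[(n : ℝ)] {x ∈ sphere (0 : EuclideanSpace ℝ (Fin (n + 1))) 1 | t < gs x})
    (heq : (∫ x in sphere (0 : EuclideanSpace ℝ (Fin (n + 1))) 1,
          (∫ y in sphere (0 : EuclideanSpace ℝ (Fin (n + 1))) 1,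
            k ⟪x, y⟫ * f x * g y ∂μH[(n : ℝ)]) ∂μH[(n : ℝ)]) =
        ∫ x in sphere (0 : EuclideanSpace ℝ (Fin (n + 1))) 1,
          (∫ y in sphere (0 : EuclideanSpace ℝ (Fin (n + 1))) 1,
            k ⟪x, y⟫ * fs x * gs y ∂μH[(n : ℝ)]) ∂μH[(n : ℝ)]) :
    ∃ p ∈ sphere (0 : EuclideanSpace ℝ (Fin (n + 1))) 1,
      (∃ φ : ℝ → ℝ, MonotoneOn φ (Icc (-1 : ℝ) 1) ∧
        ∀ x ∈ sphere (0 : EuclideanSpace ℝ (Fin (n + 1))) 1, f x = φ ⟪x, p⟫) ∧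
      (∃ ψ : ℝ → ℝ, MonotoneOn ψ (Icc (-1 : ℝ) 1) ∧
        ∀ x ∈ sphere (0 : EuclideanSpace ℝ (Fin (n + 1))) 1, g x = ψ ⟪x, p⟫) := by
  have : Fact (Module.finrank ℝ (EuclideanSpace ℝ (Fin (n + 1))) = n + 1) := ⟨by simp⟩
  have := isFiniteMeasure_hausdorffMeasure_sphere (E := EuclideanSpace ℝ (Fin (n + 1))) (n := n)
  have := isOpenPosMeasure_hausdorffMeasure_sphere (E := EuclideanSpace ℝ (Fin (n + 1))) (n := n)
  set N : EuclideanSpace ℝ (Fin (n + 1)) := EuclideanSpace.single (Fin.last n) 1 with hN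
  have hN1 : N ∈ sphere (0 : EuclideanSpace ℝ (Fin (n + 1))) 1 := by simp [hN]
  have hN0 : N ≠ 0 := ne_zero_of_mem_unit_sphere ⟨N, hN1⟩
  have hNI : ∀ x : sphere (0 : EuclideanSpace ℝ (Fin (n + 1))) 1,
      ⟪(x : EuclideanSpace ℝ (Fin (n + 1))), N⟫ ∈ Icc (-1 : ℝ) 1 := fun x =>
    inner_mem_Icc_of_mem_sphere x ⟨N, hN1⟩
  let F : C(sphere (0 : EuclideanSpace ℝ (Fin (n + 1))) 1, ℝ) := ⟨fun x => f x, hf.domRestrict⟩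
  let G : C(sphere (0 : EuclideanSpace ℝ (Fin (n + 1))) 1, ℝ) := ⟨fun x => g x, hg.domRestrict⟩
  have hne : ∀ h : EuclideanSpace ℝ (Fin (n + 1)) → ℝ,
      (¬ ∃ c : ℝ, ∀ x ∈ sphere (0 : EuclideanSpace ℝ (Fin (n + 1))) 1, h x = c) →
      ∃ x y : sphere (0 : EuclideanSpace ℝ (Fin (n + 1))) 1, h x ≠ h y := by
    intro h hc
    by_contra! hcon
    exact hc ⟨h N, fun x hx => hcon ⟨x, hx⟩ ⟨N, hN1⟩⟩
  have hsymm : ∀ h : EuclideanSpace ℝ (Fin (n + 1)) → ℝ,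
      (∃ φ : ℝ → ℝ, MonotoneOn φ (Icc (-1 : ℝ) 1) ∧
        ∀ x ∈ sphere (0 : EuclideanSpace ℝ (Fin (n + 1))) 1, h x = φ ⟪x, N⟫) →
      (Measurable fun x : sphere (0 : EuclideanSpace ℝ (Fin (n + 1))) 1 => h x) ∧
      (∃ C, ∀ x : sphere (0 : EuclideanSpace ℝ (Fin (n + 1))) 1, |h x| ≤ C) ∧
      ∀ x y : sphere (0 : EuclideanSpace ℝ (Fin (n + 1))) 1,
        ⟪(y : EuclideanSpace ℝ (Fin (n + 1))), N⟫ ≤ ⟪(x : EuclideanSpace ℝ (Fin (n + 1))), N⟫ →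
        h y ≤ h x := by
    rintro h ⟨φ, hφ, hh⟩
    have hh' : ∀ x : sphere (0 : EuclideanSpace ℝ (Fin (n + 1))) 1, h x = φ ⟪x.1, N⟫ :=
      fun x => hh x x.2
    simp only [hh']
    obtain ⟨C, hC⟩ := hφ.exists_abs_le_Icc (by norm_num)
    exact ⟨hφ.measurable_comp_Icc (by norm_num) (Continuous.measurable (by fun_prop)) hNI,
      ⟨C, fun x => hC _ (hNI x)⟩, fun x y hxy => hφ (hNI y) (hNI x) hxy⟩
  obtain ⟨hfsm, hfsb, hfsd⟩ := hsymm fs hfs.1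
  obtain ⟨hgsm, hgsb, hgsd⟩ := hsymm gs hgs.1
  rw [setIntegral_setIntegral_sphere_eq_rieszForm hk.monotoneOn F.continuous.measurable
      G.continuous.measurable ⟨‖F‖, F.norm_coe_le_norm⟩ ⟨‖G‖, G.norm_coe_le_norm⟩,
    setIntegral_setIntegral_sphere_eq_rieszForm hk.monotoneOn hfsm hgsm hfsb hgsb] at heq
  obtain ⟨p, hp, h⟩ := exists_common_pole_of_rieszForm_symmetrization_le (f := F) (g := G)
    (fun u => (sphereReflectionEquiv u).measurePreserving_hausdorffMeasure _) hk hN0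
    (hne f hfc) (hne g hgc) hfsm hgsm hfsd hgsd
    (fun t => ((hausdorffMeasure_setOf_mem_sphere_and n (t < f ·)).trans (hfs.2 t)).trans
      (hausdorffMeasure_setOf_mem_sphere_and n (t < fs ·)).symm)
    (fun t => ((hausdorffMeasure_setOf_mem_sphere_and n (t < g ·)).trans (hgs.2 t)).trans
      (hausdorffMeasure_setOf_mem_sphere_and n (t < gs ·)).symm) heq.ge
  obtain ⟨φ, hφ, hφF⟩ := exists_monotoneOn_comp_inner hp fun x y hxy => (h x y hxy).1
  obtain ⟨ψ, hψ, hψG⟩ := exists_monotoneOn_comp_inner hp fun x y hxy => (h x y hxy).2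
  exact ⟨p, hp, ⟨φ, hφ, fun x hx => hφF ⟨x, hx⟩⟩, ⟨ψ, hψ, fun x hx => hψG ⟨x, hx⟩⟩⟩
end
end

section
/- Let $k(t) = \frac{\sqrt{1-t}}{4\sqrt{2}\pi}$ on $[-1,1]$. Then the spherical convolution $k * k$ on $S^3$, defined by $(k*k)(x\cdot z) = \int_{S^3} k(x\cdot y)k(y\cdot z)\, d\mu(y)$, is a $C^1$ function on $[-1,1]$. -/
open MeasureTheory Metric Set Real
open scoped RealInnerProductSpace

noncomputable section

/-- `k(t) = √(1-t) / (4√2 π)`, the single variable function of the kernel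
`K(x,y) = ‖x-y‖/(8π)` on `S³`. -/
def kfun (t : ℝ) : ℝ := Real.sqrt (1 - t) / (4 * Real.sqrt 2 * π)

/-- A fixed point of `S³` and, for `t ∈ [-1,1]`, a point `c t ∈ S³` with `a · c t = t`. -/
def aPt : EuclideanSpace ℝ (Fin 4) := EuclideanSpace.single 0 1

def cPt (t : ℝ) : EuclideanSpace ℝ (Fin 4) :=
  t • EuclideanSpace.single 0 1 + Real.sqrt (1 - t ^ 2) • EuclideanSpace.single 1 1

/-- The spherical convolution `k * k` on `S³`: `(k*k)(t) = ∫_{S³} k(x·y) k(y·z) dμ(y)`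
for any `x, z ∈ S³` with `x·z = t` (here realized with `x = aPt`, `z = cPt t`). -/
def kConvK (t : ℝ) : ℝ :=
  ∫ y in sphere (0 : EuclideanSpace ℝ (Fin 4)) 1, kfun ⟪aPt, y⟫ * kfun ⟪y, cPt t⟫ ∂μH[(3 : ℝ)]

lemma hausdorffMeasure_sphere_lt_top :
    μH[(3 : ℝ)] (sphere (0 : EuclideanSpace ℝ (Fin 4)) 1) < ⊤ := by
  let g : (Fin 3 → ℝ) → EuclideanSpace ℝ (Fin 4) := fun u =>
    (1 + ∑ i, u i ^ 2)⁻¹ • WithLp.toLp 2 (Fin.cons ((∑ i, u i ^ 2) - 1) (fun i => 2 * u i))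
  have hpos (u : Fin 3 → ℝ) : 0 < 1 + ∑ i, u i ^ 2 := by positivity
  have hg : ContDiff ℝ 1 g := by
    rw [contDiff_euclidean]
    intro i
    have h0 : ContDiff ℝ 1 fun u : Fin 3 → ℝ => (1 + ∑ i, u i ^ 2)⁻¹ :=
      ContDiff.inv (by fun_prop) fun u => (hpos u).ne'
    refine Fin.cases ?_ (fun j => ?_) i
    · simp only [g, PiLp.smul_apply, Fin.cons_zero, smul_eq_mul]
      exact h0.mul (by fun_prop)
    · simp only [g, PiLp.smul_apply, Fin.cons_succ, smul_eq_mul]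
      exact h0.mul (by fun_prop)
  obtain ⟨K, hK⟩ := hg.contDiffOn.exists_lipschitzOnWith one_ne_zero
    (convex_Icc (-1 : Fin 3 → ℝ) 1) isCompact_Icc
  have himg : μH[(3 : ℝ)] (g '' Icc (-1) 1) < ⊤ := by
    refine (hK.hausdorffMeasure_image_le (by norm_num)).trans_lt (ENNReal.mul_lt_top ?_ ?_)
    · simp
    · have h3 : μH[(3 : ℝ)] = (volume : Measure (Fin 3 → ℝ)) := by
        simpa using hausdorffMeasure_pi_real (ι := Fin 3)
      rw [h3]
      exact isCompact_Icc.measure_lt_top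
  have hneg : μH[(3 : ℝ)] ((fun x => -x) '' (g '' Icc (-1) 1)) < ⊤ := by
    have hiso : Isometry fun x : EuclideanSpace ℝ (Fin 4) => -x :=
      (IsometryEquiv.neg (EuclideanSpace ℝ (Fin 4))).isometry
    rwa [hiso.hausdorffMeasure_image (Or.inl (by norm_num))]
  have hmem (y : EuclideanSpace ℝ (Fin 4)) (hy : ‖y‖ = 1) (h0 : y 0 ≤ 0) :
      y ∈ g '' Icc (-1) 1 := by
    have hs : y 0 ^ 2 + ∑ i : Fin 3, y i.succ ^ 2 = 1 := by
      have := EuclideanSpace.real_norm_sq_eq y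
      rw [hy, Fin.sum_univ_succ] at this
      linarith
    have hd : 0 < 1 - y 0 := by linarith
    have hsum : ∑ i : Fin 3, (y i.succ / (1 - y 0)) ^ 2 = (1 + y 0) / (1 - y 0) := by
      simp only [div_pow, ← Finset.sum_div]
      rw [show ∑ i : Fin 3, y i.succ ^ 2 = (1 - y 0) * (1 + y 0) by linarith]
      field_simp
    have habs (i : Fin 3) : |y i.succ| ≤ 1 - y 0 := by
      refine abs_le_of_sq_le_sq ?_ hd.le
      have := Finset.single_le_sum (f := fun i : Fin 3 => y i.succ ^ 2)
        (fun _ _ => sq_nonneg _) (Finset.mem_univ i)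
      simp only at this
      nlinarith
    have hfac : (1 + (1 + y 0) / (1 - y 0))⁻¹ = (1 - y 0) / 2 := by
      field_simp
      ring
    refine ⟨fun i => y i.succ / (1 - y 0), ⟨fun i => ?_, fun i => ?_⟩, ?_⟩
    · have := (abs_le.1 (habs i)).1
      simp only [Pi.neg_apply, Pi.one_apply]
      rw [le_div_iff₀ hd]
      linarith
    · have := (abs_le.1 (habs i)).2
      simp only [Pi.one_apply]
      rw [div_le_iff₀ hd]
      linarith
    · ext i
      simp only [g, hsum, hfac, PiLp.smul_apply, smul_eq_mul]
      refine Fin.cases ?_ (fun j => ?_) i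
      · simp only [Fin.cons_zero]
        field_simp
        ring
      · simp only [Fin.cons_succ]
        field_simp
  refine (measure_mono (t := g '' Icc (-1) 1 ∪ (fun x => -x) '' (g '' Icc (-1) 1)) ?_).trans_lt
    (measure_union_lt_top himg hneg)
  intro y hy
  rw [mem_sphere_zero_iff_norm] at hy
  rcases le_total (y 0) 0 with h | h
  · exact Or.inl (hmem y hy h)
  · exact Or.inr ⟨-y, hmem (-y) (by rwa [norm_neg]) (by simpa using h), neg_neg y⟩

/-- The unit vector orthogonal to `cPt t` in the plane of the first two coordinates. -/
def ePt (t : ℝ) : EuclideanSpace ℝ (Fin 4) :=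
  -Real.sqrt (1 - t ^ 2) • EuclideanSpace.single 0 1 + t • EuclideanSpace.single 1 1

/-- The mirror image of `aPt` in the hyperplane orthogonal to `ePt t`. -/
def mirrorPt (t : ℝ) : EuclideanSpace ℝ (Fin 4) := aPt + (2 * Real.sqrt (1 - t ^ 2)) • ePt t

/-- The integrand of the derivative of `kConvK`, up to a constant factor. -/
def derivIntegrand (t : ℝ) (y : EuclideanSpace ℝ (Fin 4)) : ℝ :=
  ⟪y, ePt t⟫ ^ 2 / (‖y - cPt t‖ * (‖aPt - y‖ + ‖mirrorPt t - y‖))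

lemma sq_sqrt_one_sub_sq {t : ℝ} (ht : t ∈ Icc (-1 : ℝ) 1) :
    Real.sqrt (1 - t ^ 2) ^ 2 = 1 - t ^ 2 :=
  Real.sq_sqrt (by nlinarith [ht.1, ht.2])

lemma norm_aPt : ‖aPt‖ = 1 := by simp [aPt]

lemma norm_cPt {t : ℝ} (ht : t ∈ Icc (-1 : ℝ) 1) : ‖cPt t‖ = 1 := by
  have h : ‖cPt t‖ ^ 2 = 1 := by
    rw [EuclideanSpace.real_norm_sq_eq]
    simp [cPt, Fin.sum_univ_four, sq_sqrt_one_sub_sq ht]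
  nlinarith [norm_nonneg (cPt t)]

lemma norm_ePt {t : ℝ} (ht : t ∈ Icc (-1 : ℝ) 1) : ‖ePt t‖ = 1 := by
  have h : ‖ePt t‖ ^ 2 = 1 := by
    rw [EuclideanSpace.real_norm_sq_eq]
    simp [ePt, Fin.sum_univ_four, sq_sqrt_one_sub_sq ht]
  nlinarith [norm_nonneg (ePt t)]

lemma inner_aPt_ePt (t : ℝ) : ⟪aPt, ePt t⟫ = -Real.sqrt (1 - t ^ 2) := by
  simp [aPt, ePt, PiLp.inner_apply]

lemma inner_cPt_ePt (t : ℝ) : ⟪cPt t, ePt t⟫ = 0 := by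
  simp [cPt, ePt, PiLp.inner_apply, Fin.sum_univ_four]
  ring

lemma inner_mirrorPt_ePt {t : ℝ} (ht : t ∈ Icc (-1 : ℝ) 1) :
    ⟪mirrorPt t, ePt t⟫ = Real.sqrt (1 - t ^ 2) := by
  rw [mirrorPt, inner_add_left, real_inner_smul_left, inner_aPt_ePt, real_inner_self_eq_norm_sq,
    norm_ePt ht]
  ring

lemma continuous_cPt : Continuous cPt := by unfold cPt; fun_prop

lemma continuous_ePt : Continuous ePt := by unfold ePt; fun_prop

lemma continuous_mirrorPt : Continuous mirrorPt := by
  have := continuous_ePt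
  unfold mirrorPt
  fun_prop

lemma kfun_inner {x y : EuclideanSpace ℝ (Fin 4)} (hx : ‖x‖ = 1) (hy : ‖y‖ = 1) :
    kfun ⟪x, y⟫ = ‖x - y‖ / (8 * π) := by
  have h : 1 - ⟪x, y⟫ = ‖x - y‖ ^ 2 / 2 := by
    rw [norm_sub_sq_real, hx, hy]
    ring
  rw [kfun, h, Real.sqrt_div' _ zero_le_two, Real.sqrt_sq (norm_nonneg _), div_div]
  congr 1
  linear_combination (4 * π) * Real.mul_self_sqrt zero_le_two

lemma kConvK_eq {t : ℝ} (ht : t ∈ Icc (-1 : ℝ) 1) :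
    kConvK t = (64 * π ^ 2)⁻¹ * ∫ y in sphere (0 : EuclideanSpace ℝ (Fin 4)) 1,
      ‖aPt - y‖ * ‖y - cPt t‖ ∂μH[(3 : ℝ)] := by
  rw [kConvK, ← integral_const_mul]
  refine setIntegral_congr_fun isClosed_sphere.measurableSet fun y hy => ?_
  rw [mem_sphere_zero_iff_norm] at hy
  simp only [kfun_inner norm_aPt hy, kfun_inner hy (norm_cPt ht)]
  field_simp
  ring

instance isFiniteMeasure_restrict_sphere : IsFiniteMeasure
    (μH[(3 : ℝ)].restrict (sphere (0 : EuclideanSpace ℝ (Fin 4)) 1)) :=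
  isFiniteMeasure_restrict.2 hausdorffMeasure_sphere_lt_top.ne

lemma ae_sphere_ne (x : EuclideanSpace ℝ (Fin 4)) :
    ∀ᵐ y ∂μH[(3 : ℝ)].restrict (sphere (0 : EuclideanSpace ℝ (Fin 4)) 1), y ≠ x := by
  have := Measure.nullSingletonClass_hausdorff (EuclideanSpace ℝ (Fin 4)) (d := 3) (by norm_num)
  exact ae_restrict_of_ae (by simp [ae_iff])

lemma ae_sphere_norm :
    ∀ᵐ y ∂μH[(3 : ℝ)].restrict (sphere (0 : EuclideanSpace ℝ (Fin 4)) 1), ‖y‖ = 1 :=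
  (ae_restrict_mem isClosed_sphere.measurableSet).mono fun _ hy => mem_sphere_zero_iff_norm.1 hy

lemma norm_derivIntegrand_le {t : ℝ} (ht : t ∈ Icc (-1 : ℝ) 1) (y : EuclideanSpace ℝ (Fin 4)) :
    ‖derivIntegrand t y‖ ≤ 1 := by
  have hle (v : EuclideanSpace ℝ (Fin 4)) : |⟪v, ePt t⟫| ≤ ‖v‖ := by
    simpa [norm_ePt ht] using abs_real_inner_le_norm v (ePt t)
  have h1 : |⟪y, ePt t⟫| ≤ ‖y - cPt t‖ := by
    simpa [inner_sub_left, inner_cPt_ePt] using hle (y - cPt t)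
  have h2 : |⟪y, ePt t⟫| ≤ ‖aPt - y‖ + ‖mirrorPt t - y‖ := by
    have ha := hle (aPt - y)
    have hm := hle (mirrorPt t - y)
    rw [inner_sub_left, inner_aPt_ePt, abs_le] at ha
    rw [inner_sub_left, inner_mirrorPt_ePt ht, abs_le] at hm
    have := norm_nonneg (aPt - y)
    have := norm_nonneg (mirrorPt t - y)
    rw [abs_le]
    constructor <;> linarith
  rw [derivIntegrand, Real.norm_of_nonneg (by positivity)]
  refine div_le_one_of_le₀ ?_ (by positivity)
  rw [← sq_abs, pow_two]
  exact mul_le_mul h1 h2 (abs_nonneg _) (norm_nonneg _)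

lemma continuousOn_integral_derivIntegrand :
    ContinuousOn (fun t => ∫ y in sphere (0 : EuclideanSpace ℝ (Fin 4)) 1,
      derivIntegrand t y ∂μH[(3 : ℝ)]) (Icc (-1 : ℝ) 1) := by
  intro t ht
  refine continuousWithinAt_of_dominated (bound := fun _ => 1) (.of_forall fun t => ?_) ?_
    (integrable_const 1) ?_
  · unfold derivIntegrand
    exact Measurable.aestronglyMeasurable (by fun_prop)
  · filter_upwards [self_mem_nhdsWithin] with t ht
    exact .of_forall (norm_derivIntegrand_le ht)
  · filter_upwards [ae_sphere_ne aPt, ae_sphere_ne (cPt t)] with y hya hyc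
    have h1 : 0 < ‖y - cPt t‖ := norm_pos_iff.2 (sub_ne_zero.2 hyc)
    have h2 : 0 < ‖aPt - y‖ := norm_pos_iff.2 (sub_ne_zero.2 hya.symm)
    have := continuous_cPt
    have := continuous_ePt
    have := continuous_mirrorPt
    refine ContinuousAt.continuousWithinAt ?_
    exact ContinuousAt.div (Continuous.continuousAt (by fun_prop))
      (Continuous.continuousAt (by fun_prop)) (by positivity)

lemma continuousOn_kConvK : ContinuousOn kConvK (Icc (-1 : ℝ) 1) := by
  refine ContinuousOn.congr (ContinuousOn.mul continuousOn_const ?_) fun t ht => kConvK_eq ht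
  refine continuousOn_of_dominated (bound := fun _ => 4) (fun t _ => ?_) (fun t ht => ?_)
    (integrable_const 4) (.of_forall fun y => ?_)
  · exact Continuous.aestronglyMeasurable (by fun_prop)
  · filter_upwards [ae_sphere_norm] with y hy
    have h1 := norm_sub_le aPt y
    have h2 := norm_sub_le y (cPt t)
    rw [norm_aPt, hy] at h1
    rw [norm_cPt ht, hy] at h2
    rw [Real.norm_of_nonneg (by positivity)]
    nlinarith [norm_nonneg (aPt - y), norm_nonneg (y - cPt t)]
  · have := continuous_cPt
    exact Continuous.continuousOn (by fun_prop)

lemma hasDerivAt_cPt {t : ℝ} (ht : t ∈ Ioo (-1 : ℝ) 1) :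
    HasDerivAt cPt (-(Real.sqrt (1 - t ^ 2))⁻¹ • ePt t) t := by
  have hpos : 0 < 1 - t ^ 2 := by nlinarith [ht.1, ht.2]
  have hs : Real.sqrt (1 - t ^ 2) ≠ 0 := (Real.sqrt_pos.2 hpos).ne'
  have h := ((hasDerivAt_id t).smul_const (EuclideanSpace.single (0 : Fin 4) (1 : ℝ))).add
    ((((hasDerivAt_pow 2 t).const_sub 1).sqrt hpos.ne').smul_const
      (EuclideanSpace.single (1 : Fin 4) (1 : ℝ)))
  refine h.congr_deriv ?_
  simp only [ePt, smul_add, smul_smul]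
  congr 2
  · field_simp
  · field_simp
    push_cast
    ring

lemma hasDerivAt_norm_sub_cPt {t : ℝ} (ht : t ∈ Ioo (-1 : ℝ) 1)
    {y : EuclideanSpace ℝ (Fin 4)} (hy : y ≠ cPt t) :
    HasDerivAt (fun t => ‖y - cPt t‖)
      ((Real.sqrt (1 - t ^ 2))⁻¹ * (⟪y, ePt t⟫ / ‖y - cPt t‖)) t := by
  have hne : ‖y - cPt t‖ ≠ 0 := norm_ne_zero_iff.2 (sub_ne_zero.2 hy)
  have h := (((hasDerivAt_cPt ht).const_sub y).norm_sq).sqrt (pow_ne_zero 2 hne)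
  simp only [Real.sqrt_sq (norm_nonneg _)] at h
  refine h.congr_deriv ?_
  rw [neg_smul, neg_neg, real_inner_smul_right, inner_sub_left, inner_cPt_ePt, sub_zero]
  field_simp

lemma hasDerivAt_integral_norm_mul_norm {t : ℝ} (ht : t ∈ Ioo (-1 : ℝ) 1) :
    Integrable (fun y => ‖aPt - y‖ *
      ((Real.sqrt (1 - t ^ 2))⁻¹ * (⟪y, ePt t⟫ / ‖y - cPt t‖)))
      (μH[(3 : ℝ)].restrict (sphere (0 : EuclideanSpace ℝ (Fin 4)) 1)) ∧
    HasDerivAt (fun t => ∫ y in sphere (0 : EuclideanSpace ℝ (Fin 4)) 1,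
      ‖aPt - y‖ * ‖y - cPt t‖ ∂μH[(3 : ℝ)])
      (∫ y in sphere (0 : EuclideanSpace ℝ (Fin 4)) 1, ‖aPt - y‖ *
        ((Real.sqrt (1 - t ^ 2))⁻¹ * (⟪y, ePt t⟫ / ‖y - cPt t‖)) ∂μH[(3 : ℝ)]) t := by
  have hpos : 1 - t ^ 2 ≠ 0 := by nlinarith [ht.1, ht.2]
  have hc : ContDiffAt ℝ 1 cPt t := by
    unfold cPt
    exact (contDiffAt_id.smul contDiffAt_const).add
      (((contDiffAt_const.sub (contDiffAt_id.pow 2)).sqrt hpos).smul contDiffAt_const)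
  obtain ⟨K, s, hs, hK⟩ := hc.exists_lipschitzOnWith
  refine hasDerivAt_integral_of_dominated_loc_of_lip (bound := fun _ => 2 * K) hs
    (.of_forall fun t => ?_) ?_ ?_ ?_ (integrable_const _) ?_
  · exact Continuous.aestronglyMeasurable (by fun_prop)
  · refine Integrable.of_bound (C := 4) (Continuous.aestronglyMeasurable (by fun_prop)) ?_
    filter_upwards [ae_sphere_norm] with y hy
    have h1 := norm_sub_le aPt y
    have h2 := norm_sub_le y (cPt t)
    rw [norm_aPt, hy] at h1
    rw [norm_cPt (Ioo_subset_Icc_self ht), hy] at h2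
    rw [Real.norm_of_nonneg (by positivity)]
    nlinarith [norm_nonneg (aPt - y), norm_nonneg (y - cPt t)]
  · exact Measurable.aestronglyMeasurable (by fun_prop)
  · filter_upwards [ae_sphere_norm] with y hy
    refine LipschitzOnWith.of_dist_le_mul fun u hu v hv => ?_
    have h1 := norm_sub_le aPt y
    rw [norm_aPt, hy] at h1
    have h2 : |‖y - cPt u‖ - ‖y - cPt v‖| ≤ K * dist u v := by
      refine (abs_norm_sub_norm_le _ _).trans ?_
      rw [sub_sub_sub_cancel_left, ← dist_eq_norm, dist_comm]
      exact hK.dist_le_mul u hu v hv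
    have hK0 : (0 : ℝ) ≤ 2 * K := by positivity
    rw [Real.dist_eq, ← mul_sub, abs_mul, abs_norm, Real.coe_nnabs, abs_of_nonneg hK0, mul_assoc]
    exact mul_le_mul (by linarith) h2 (abs_nonneg _) zero_le_two
  · filter_upwards [ae_sphere_ne (cPt t)] with y hy
    exact (hasDerivAt_norm_sub_cPt ht hy).const_mul _

lemma measurePreserving_sphere
    (R : EuclideanSpace ℝ (Fin 4) ≃ₗᵢ[ℝ] EuclideanSpace ℝ (Fin 4)) :
    MeasurePreserving R (μH[(3 : ℝ)].restrict (sphere (0 : EuclideanSpace ℝ (Fin 4)) 1))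
      (μH[(3 : ℝ)].restrict (sphere (0 : EuclideanSpace ℝ (Fin 4)) 1)) := by
  have h := (R.toIsometryEquiv.measurePreserving_hausdorffMeasure 3).restrict_preimage
    (isClosed_sphere (x := (0 : EuclideanSpace ℝ (Fin 4))) (ε := 1)).measurableSet
  have hpre : R ⁻¹' sphere (0 : EuclideanSpace ℝ (Fin 4)) 1 = sphere 0 1 := by
    ext y
    simp
  simpa [hpre] using h

lemma integral_symmetrize {t : ℝ} (ht : t ∈ Ioo (-1 : ℝ) 1) :
    ∫ y in sphere (0 : EuclideanSpace ℝ (Fin 4)) 1, ‖aPt - y‖ *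
      ((Real.sqrt (1 - t ^ 2))⁻¹ * (⟪y, ePt t⟫ / ‖y - cPt t‖)) ∂μH[(3 : ℝ)] =
    2 * ∫ y in sphere (0 : EuclideanSpace ℝ (Fin 4)) 1, derivIntegrand t y ∂μH[(3 : ℝ)] := by
  have htI := Ioo_subset_Icc_self ht
  have hs : 0 < Real.sqrt (1 - t ^ 2) := Real.sqrt_pos.2 (by nlinarith [ht.1, ht.2])
  set Q : EuclideanSpace ℝ (Fin 4) → ℝ := fun y => ‖aPt - y‖ *
    ((Real.sqrt (1 - t ^ 2))⁻¹ * (⟪y, ePt t⟫ / ‖y - cPt t‖)) with hQ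
  have hint := (hasDerivAt_integral_norm_mul_norm ht).1
  set R := (ℝ ∙ ePt t)ᗮ.reflection with hR
  have hRapp (v : EuclideanSpace ℝ (Fin 4)) : R v = v - (2 * ⟪v, ePt t⟫) • ePt t := by
    rw [hR, Submodule.reflection_orthogonal_apply, Submodule.reflection_singleton_apply,
      norm_ePt htI, real_inner_comm]
    simp [two_smul, two_mul, add_smul]
  have hmp := measurePreserving_sphere R
  have hRint : Integrable (fun y => Q (R y))
      (μH[(3 : ℝ)].restrict (sphere (0 : EuclideanSpace ℝ (Fin 4)) 1)) :=
    hmp.integrable_comp_of_integrable hint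
  have hReq : ∫ y in sphere (0 : EuclideanSpace ℝ (Fin 4)) 1, Q (R y) ∂μH[(3 : ℝ)] =
      ∫ y in sphere (0 : EuclideanSpace ℝ (Fin 4)) 1, Q y ∂μH[(3 : ℝ)] :=
    hmp.integral_comp R.toHomeomorph.measurableEmbedding Q
  have hQR (y : EuclideanSpace ℝ (Fin 4)) : Q (R y) = -(‖mirrorPt t - y‖ *
      ((Real.sqrt (1 - t ^ 2))⁻¹ * (⟪y, ePt t⟫ / ‖y - cPt t‖))) := by
    have h1 : ‖aPt - R y‖ = ‖mirrorPt t - y‖ := by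
      have hm : R (mirrorPt t) = aPt := by
        rw [hRapp, inner_mirrorPt_ePt htI, mirrorPt, add_sub_cancel_right]
      rw [← hm, ← map_sub, R.norm_map]
    have h2 : ‖R y - cPt t‖ = ‖y - cPt t‖ := by
      have hm : R (cPt t) = cPt t := by simp [hRapp, inner_cPt_ePt]
      nth_rw 1 [← hm]
      rw [← map_sub, R.norm_map]
    have h3 : ⟪R y, ePt t⟫ = -⟪y, ePt t⟫ := by
      rw [hRapp, inner_sub_left, real_inner_smul_left, real_inner_self_eq_norm_sq, norm_ePt htI]
      ring
    simp only [hQ, h1, h2, h3]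
    ring
  have hsum (y : EuclideanSpace ℝ (Fin 4)) : Q y + Q (R y) = 4 * derivIntegrand t y := by
    have hdiff : ‖aPt - y‖ ^ 2 - ‖mirrorPt t - y‖ ^ 2 =
        4 * Real.sqrt (1 - t ^ 2) * ⟪y, ePt t⟫ := by
      rw [← norm_sub_rev y, ← norm_sub_rev y, norm_sub_sq_real y, norm_sub_sq_real y, mirrorPt,
        norm_add_sq_real, inner_add_right, real_inner_smul_right, real_inner_smul_right,
        inner_aPt_ePt, norm_smul, norm_ePt htI, Real.norm_of_nonneg (by positivity)]
      ring
    rw [hQR, hQ, derivIntegrand]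
    simp only
    have ha := norm_nonneg (aPt - y)
    have hm := norm_nonneg (mirrorPt t - y)
    rcases eq_or_ne (‖aPt - y‖ + ‖mirrorPt t - y‖) 0 with h0 | h0
    · rw [show ‖aPt - y‖ = 0 by linarith, show ‖mirrorPt t - y‖ = 0 by linarith]
      simp
    · have hq : (‖aPt - y‖ - ‖mirrorPt t - y‖) * (Real.sqrt (1 - t ^ 2))⁻¹ =
          4 * ⟪y, ePt t⟫ / (‖aPt - y‖ + ‖mirrorPt t - y‖) := by
        field_simp
        linear_combination hdiff
      calc _ = ((‖aPt - y‖ - ‖mirrorPt t - y‖) * (Real.sqrt (1 - t ^ 2))⁻¹) *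
            (⟪y, ePt t⟫ / ‖y - cPt t‖) := by ring
        _ = _ := by
          rw [hq, div_mul_div_comm, mul_comm (‖y - cPt t‖)]
          ring
  have hfin : 2 * ∫ y in sphere (0 : EuclideanSpace ℝ (Fin 4)) 1, Q y ∂μH[(3 : ℝ)] =
      4 * ∫ y in sphere (0 : EuclideanSpace ℝ (Fin 4)) 1, derivIntegrand t y ∂μH[(3 : ℝ)] := by
    rw [← integral_const_mul 4]
    simp_rw [← hsum]
    rw [integral_add hint hRint, hReq]
    ring
  linarith

lemma hasDerivAt_kConvK {t : ℝ} (ht : t ∈ Ioo (-1 : ℝ) 1) :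
    HasDerivAt kConvK ((32 * π ^ 2)⁻¹ * ∫ y in sphere (0 : EuclideanSpace ℝ (Fin 4)) 1,
      derivIntegrand t y ∂μH[(3 : ℝ)]) t := by
  have h := (hasDerivAt_integral_norm_mul_norm ht).2.const_mul ((64 * π ^ 2)⁻¹)
  rw [integral_symmetrize ht] at h
  refine (h.congr_of_eventuallyEq ?_).congr_deriv ?_
  · filter_upwards [Icc_mem_nhds ht.1 ht.2] with u hu using kConvK_eq hu
  · field_simp
    ring

/-- A continuous function on `[a, b]` whose derivative on `(a, b)` extends continuously to `[a, b]`
is `C¹` on `[a, b]`. -/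
lemma contDiffOn_one_Icc_of_hasDerivAt_Ioo {f g : ℝ → ℝ} {a b : ℝ} (hab : a < b)
    (hf : ContinuousOn f (Icc a b)) (hg : ContinuousOn g (Icc a b))
    (hfg : ∀ t ∈ Ioo a b, HasDerivAt f (g t) t) : ContDiffOn ℝ 1 f (Icc a b) := by
  have hdiff : DifferentiableOn ℝ f (Ioo a b) := fun t ht =>
    (hfg t ht).differentiableAt.differentiableWithinAt
  have hderiv : ∀ t ∈ Icc a b, HasDerivWithinAt f (g t) (Icc a b) t := by
    intro t ht
    rcases eq_or_lt_of_le ht.1 with rfl | hat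
    · refine (hasDerivWithinAt_Ici_of_tendsto_deriv hdiff
        ((hf _ ht).mono Ioo_subset_Icc_self) (Ioo_mem_nhdsGT hab) ?_).mono Icc_subset_Ici_self
      rw [← nhdsWithin_Ioo_eq_nhdsGT hab]
      refine Filter.Tendsto.congr' ?_ ((hg _ ht).mono Ioo_subset_Icc_self)
      filter_upwards [self_mem_nhdsWithin] with u hu using (hfg u hu).deriv.symm
    rcases eq_or_lt_of_le ht.2 with rfl | htb
    · refine (hasDerivWithinAt_Iic_of_tendsto_deriv hdiff
        ((hf _ ht).mono Ioo_subset_Icc_self) (Ioo_mem_nhdsLT hab) ?_).mono Icc_subset_Iic_self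
      rw [← nhdsWithin_Ioo_eq_nhdsLT hab]
      refine Filter.Tendsto.congr' ?_ ((hg _ ht).mono Ioo_subset_Icc_self)
      filter_upwards [self_mem_nhdsWithin] with u hu using (hfg u hu).deriv.symm
    · exact (hfg t ⟨hat, htb⟩).hasDerivWithinAt
  rw [contDiffOn_one_iff_derivWithin (uniqueDiffOn_Icc hab)]
  exact ⟨fun t ht => (hderiv t ht).differentiableWithinAt, hg.congr fun t ht =>
    (hderiv t ht).derivWithin (uniqueDiffOn_Icc hab t ht)⟩

/-- The spherical convolution `k * k` is `C¹` on `[-1,1]`. -/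
theorem stmt_12 : ContDiffOn ℝ 1 kConvK (Icc (-1 : ℝ) 1) := by
  exact contDiffOn_one_Icc_of_hasDerivAt_Ioo (by norm_num) continuousOn_kConvK
    (continuousOn_const.mul continuousOn_integral_derivIntegrand) fun _ => hasDerivAt_kConvK
end
end
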